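/- Let 0 < q < 1 and d > 0. Assume Ω admits a normalized first Dirichlet eigenpair (λ₁, φ₁) and a torsion function ξ. Then there exists a positive number μ₀ such that for every μ ∈ (0, μ₀) the problem −(1 + d‖∇u‖_2²) Δu = μ u^q + π sin³(u) in Ω, u > 0 in Ω, u = 0 on ∂Ω has at least one classical solution u, which moreover satisfies 0 < u(x) ≤ π/2 for all x ∈ Ω. -/

import Mathlib

open MeasureTheory Set Real
open scoped ENNReal NNReal

noncomputable section

/-- The Laplacian of `u : ℝ^N → ℝ`, as the sum of second partial derivatives. -/
def lapl {N : ℕ} (u : EuclideanSpace ℝ (Fin N) → ℝ) (x : EuclideanSpace ℝ (Fin N)) : ℝ :=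
  ∑ i : Fin N, fderiv ℝ (fun y => fderiv ℝ u y (EuclideanSpace.single i 1)) x
    (EuclideanSpace.single i 1)

/-- The `L^p` norm of `u` on `Ω`. -/
def LpNorm {N : ℕ} (Ω : Set (EuclideanSpace ℝ (Fin N))) (p : ℝ≥0∞)
    (u : EuclideanSpace ℝ (Fin N) → ℝ) : ℝ :=
  (eLpNorm u p (volume.restrict Ω)).toReal

/-- The `L²` norm of the gradient of `u` on `Ω`. -/
def gradNorm2 {N : ℕ} (Ω : Set (EuclideanSpace ℝ (Fin N)))
    (u : EuclideanSpace ℝ (Fin N) → ℝ) : ℝ :=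
  (eLpNorm (fun x => gradient u x) 2 (volume.restrict Ω)).toReal

/-- A torsion function of `Ω`: `ξ ∈ C(Ω̄) ∩ C²(Ω)`, `ξ ≥ 0` in `Ω`, `-Δξ = 1` in `Ω`,
`ξ = 0` on `∂Ω`. -/
def IsTorsionFn {N : ℕ} (Ω : Set (EuclideanSpace ℝ (Fin N)))
    (ξ : EuclideanSpace ℝ (Fin N) → ℝ) : Prop :=
  ContinuousOn ξ (closure Ω) ∧ ContDiffOn ℝ 2 ξ Ω ∧ (∀ x ∈ Ω, 0 ≤ ξ x) ∧
    (∀ x ∈ Ω, -lapl ξ x = 1) ∧ (∀ x ∈ frontier Ω, ξ x = 0)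

/-- A normalized first Dirichlet eigenpair of `Ω`: `λ₁ > 0`, `φ₁ ∈ C(Ω̄) ∩ C²(Ω)`, `φ₁ > 0`
in `Ω`, `-Δφ₁ = λ₁ φ₁` in `Ω`, `φ₁ = 0` on `∂Ω`, and `max_{Ω̄} φ₁ = 1`. -/
def IsFirstEigenpair {N : ℕ} (Ω : Set (EuclideanSpace ℝ (Fin N)))
    (l : ℝ) (φ₁ : EuclideanSpace ℝ (Fin N) → ℝ) : Prop :=
  0 < l ∧ ContinuousOn φ₁ (closure Ω) ∧ ContDiffOn ℝ 2 φ₁ Ω ∧ (∀ x ∈ Ω, 0 < φ₁ x) ∧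
    (∀ x ∈ Ω, -lapl φ₁ x = l * φ₁ x) ∧ (∀ x ∈ frontier Ω, φ₁ x = 0) ∧
    IsGreatest (φ₁ '' closure Ω) 1

section Helpers

open Filter Topology Metric

abbrev EE (N : ℕ) := EuclideanSpace ℝ (Fin N)

/-- A pair of radial kernels adapted to the Laplacian. -/
structure Ker (N : ℕ) where
  σ : EE N → ℝ
  ρ : EE N → ℝ
  σ_smooth : ContDiff ℝ 4 σ
  ρ_smooth : ContDiff ℝ 4 ρ
  σ_supp : ∀ z, 1 ≤ ‖z‖ → σ z = 0
  ρ_supp : ∀ z, 1 ≤ ‖z‖ → ρ z = 0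
  σ_nn : ∀ z, 0 ≤ σ z
  ρ_nn : ∀ z, 0 ≤ ρ z
  ρ_int : ∫ z, ρ z = 1
  σ_int : 0 < ∫ z, σ z
  deriv : ∀ z, HasFDerivAt σ (-(ρ z) • innerSL ℝ z) z

theorem hcs_of_supp {N : ℕ} {F : Type*} [Zero F] {κ : EE N → F} (h : ∀ z, 1 ≤ ‖z‖ → κ z = 0) :
    HasCompactSupport κ := by
  refine HasCompactSupport.intro (isCompact_closedBall (0 : EE N) 1) ?_
  intro x hx
  apply h
  simp at hx
  exact hx.le

theorem exists_ker {N : ℕ} (hN : 1 ≤ N) : Nonempty (Ker N) := by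
  set g : ℝ → ℝ := fun s => Real.smoothTransition (1 - s) with hg
  have gs : ContDiff ℝ 5 g := by
    have : ContDiff ℝ ((5 : ℕ∞) : WithTop ℕ∞) Real.smoothTransition := Real.smoothTransition.contDiff
    exact this.comp (contDiff_const.sub contDiff_id)
  have ganti : Antitone g := fun a b hab => Real.smoothTransition.monotone (by linarith)
  have g' : ContDiff ℝ 4 (deriv g) := by
    have : ContDiff ℝ (4 + 1) g := by norm_num; exact gs
    exact (contDiff_succ_iff_deriv.1 this).2.2
  have gd : Differentiable ℝ g := gs.differentiable (by norm_num)
  set σ0 : EE N → ℝ := fun z => g (‖z‖ ^ 2) with hσ0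
  set ρ0 : EE N → ℝ := fun z => -2 * deriv g (‖z‖ ^ 2) with hρ0
  have g0 : ∀ s, 1 ≤ s → g s = 0 := fun s hs =>
    Real.smoothTransition.zero_of_nonpos (by linarith)
  have g'0 : ∀ s, 1 ≤ s → deriv g s = 0 := by
    intro s hs
    have h1 : ∀ s, 1 < s → deriv g s = 0 := by
      intro s hs
      have : g =ᶠ[𝓝 s] fun _ => 0 := by
        filter_upwards [Ioi_mem_nhds hs] with x hx using g0 x (le_of_lt hx)
      rw [this.deriv_eq]; simp
    have hcl : IsClosed {s | deriv g s = 0} := isClosed_eq g'.continuous continuous_const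
    have : closure (Ioi (1:ℝ)) ⊆ {s | deriv g s = 0} := closure_minimal (fun x hx => h1 x hx) hcl
    rw [closure_Ioi] at this
    exact this hs
  have sσ : ContDiff ℝ 4 σ0 := (gs.of_le (by norm_num)).comp (contDiff_norm_sq ℝ)
  have sρ : ContDiff ℝ 4 ρ0 := contDiff_const.mul (g'.comp (contDiff_norm_sq ℝ))
  have supσ : ∀ z, 1 ≤ ‖z‖ → σ0 z = 0 := fun z hz => g0 _ (by nlinarith)
  have supρ : ∀ z, 1 ≤ ‖z‖ → ρ0 z = 0 := fun z hz => by
    simp only [hρ0]; rw [g'0 _ (by nlinarith)]; ring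
  have nσ : ∀ z, 0 ≤ σ0 z := fun z => Real.smoothTransition.nonneg _
  have nρ : ∀ z, 0 ≤ ρ0 z := fun z => by
    have : deriv g (‖z‖ ^ 2) ≤ 0 := ganti.deriv_nonpos
    simp only [hρ0]; linarith
  have hd : ∀ z, HasFDerivAt σ0 (-(ρ0 z) • innerSL ℝ z) z := by
    intro z
    have h1 : HasFDerivAt (fun z : EE N => ‖z‖ ^ 2) (2 • (innerSL ℝ z)) z :=
      (hasStrictFDerivAt_norm_sq z).hasFDerivAt
    have h2 := (gd (‖z‖ ^ 2)).hasDerivAt.comp_hasFDerivAt z h1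
    refine h2.congr_fderiv ?_
    ext v
    simp [hρ0]
    ring
  have iσ : 0 < ∫ z, σ0 z := by
    refine sσ.continuous.integral_pos_of_hasCompactSupport_nonneg_nonzero (hcs_of_supp supσ) nσ
      (x := 0) ?_
    simp [hσ0, hg]
  have iρ : 0 < ∫ z, ρ0 z := by
    have : ∃ s, 0 ≤ s ∧ deriv g s ≠ 0 := by
      by_contra hcon
      push Not at hcon
      have := Convex.is_const_of_fderivWithin_eq_zero (𝕜 := ℝ) (f := g) (s := Icc 0 1)
        (convex_Icc 0 1) gd.differentiableOn (by
          intro x hx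
          rw [(gd x).fderivWithin (uniqueDiffOn_Icc zero_lt_one x hx)]
          ext
          simp [hcon x hx.1]) (x := 0) (y := 1) (by simp) (by simp)
      simp [hg] at this
    obtain ⟨s, hs, hne⟩ := this
    refine sρ.continuous.integral_pos_of_hasCompactSupport_nonneg_nonzero (hcs_of_supp supρ) nρ
      (x := EuclideanSpace.single ⟨0, hN⟩ (Real.sqrt s)) ?_
    simp only [hρ0, PiLp.norm_single, norm_of_nonneg (Real.sqrt_nonneg s), Real.sq_sqrt hs]
    simpa using hne
  set c := ∫ z, ρ0 z
  refine ⟨⟨fun z => c⁻¹ * σ0 z, fun z => c⁻¹ * ρ0 z, contDiff_const.mul sσ, contDiff_const.mul sρ,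
    fun z hz => by simp [supσ z hz], fun z hz => by simp [supρ z hz],
    fun z => mul_nonneg (by positivity) (nσ z), fun z => mul_nonneg (by positivity) (nρ z), ?_, ?_, ?_⟩⟩
  · rw [integral_const_mul]; exact inv_mul_cancel₀ iρ.ne'
  · rw [integral_const_mul]; positivity
  · intro z
    refine ((hd z).const_mul c⁻¹).congr_fderiv ?_
    ext v; simp; ring


/-- Bounded measurable functions. -/
def BM {N : ℕ} (f : EE N → ℝ) (M : ℝ) : Prop := Measurable f ∧ ∀ x, |f x| ≤ M

/-- Admissible kernels. -/
def Adm {N : ℕ} (n : ℕ) (κ : EE N → ℝ) : Prop := ContDiff ℝ n κ ∧ ∀ z, 1 ≤ ‖z‖ → κ z = 0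

/-- weighted average operator -/
def Cv {N : ℕ} (κ : EE N → ℝ) (t : ℝ) (f : EE N → ℝ) (x : EE N) : ℝ := ∫ z, κ z * f (x + t • z)

theorem Adm.cont {N n : ℕ} {κ : EE N → ℝ} (h : Adm n κ) : Continuous κ := h.1.continuous
theorem Adm.hcs {N n : ℕ} {κ : EE N → ℝ} (h : Adm n κ) : HasCompactSupport κ := hcs_of_supp h.2
theorem Adm.int {N n : ℕ} {κ : EE N → ℝ} (h : Adm n κ) : Integrable κ :=
  h.cont.integrable_of_hasCompactSupport h.hcs
theorem Adm.of_le {N n m : ℕ} {κ : EE N → ℝ} (h : Adm n κ) (hm : m ≤ n) : Adm m κ :=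
  ⟨h.1.of_le (by exact_mod_cast hm), h.2⟩

theorem Ker.admσ {N : ℕ} (k : Ker N) : Adm 4 k.σ := ⟨k.σ_smooth, k.σ_supp⟩
theorem Ker.admρ {N : ℕ} (k : Ker N) : Adm 4 k.ρ := ⟨k.ρ_smooth, k.ρ_supp⟩

theorem BM.of_hcs {N : ℕ} {f : EE N → ℝ} (h : Continuous f) (hc : HasCompactSupport f) :
    ∃ M, 0 ≤ M ∧ BM f M := by
  obtain ⟨C, hC⟩ := h.bounded_above_of_compact_support hc
  exact ⟨|C|, abs_nonneg _, h.measurable, fun x => (hC x).trans (le_abs_self _)⟩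

theorem BM.locInt {N : ℕ} {f : EE N → ℝ} {M : ℝ} (h : BM f M) : LocallyIntegrable f := by
  have : LocallyIntegrable (fun _ : EE N => M) := locallyIntegrable_const _
  refine this.mono h.1.aestronglyMeasurable (Eventually.of_forall fun x => ?_)
  exact (h.2 x).trans (le_abs_self _)

theorem BM.nonneg {N : ℕ} {f : EE N → ℝ} {M : ℝ} (h : BM f M) : 0 ≤ M :=
  (abs_nonneg _).trans (h.2 0)

theorem BM.comp {N : ℕ} {f : EE N → ℝ} {M : ℝ} (h : BM f M) (x : EE N) (t : ℝ) :
    BM (fun z => f (x + t • z)) M := ⟨h.1.comp (by fun_prop), fun z => h.2 _⟩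

theorem BM.sub {N : ℕ} {f g : EE N → ℝ} {M M' : ℝ} (h : BM f M) (h' : BM g M') :
    BM (fun z => f z - g z) (M + M') := ⟨h.1.sub h'.1, fun z => by
      have := h.2 z; have := h'.2 z
      have := abs_sub (f z) (g z); linarith⟩

theorem BM.add {N : ℕ} {f g : EE N → ℝ} {M M' : ℝ} (h : BM f M) (h' : BM g M') :
    BM (fun z => f z + g z) (M + M') := ⟨h.1.add h'.1, fun z => by
      have := h.2 z; have := h'.2 z
      have := abs_add_le (f z) (g z); linarith⟩

theorem BM.cmul {N : ℕ} {f : EE N → ℝ} {M : ℝ} (h : BM f M) (c : ℝ) :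
    BM (fun z => c * f z) (|c| * M) := ⟨h.1.const_mul c, fun z => by
      rw [abs_mul]; exact mul_le_mul_of_nonneg_left (h.2 z) (abs_nonneg _)⟩

theorem BM.const {N : ℕ} (c : ℝ) : BM (fun _ : EE N => c) |c| := ⟨measurable_const, fun _ => le_rfl⟩

theorem Cv_int {N n : ℕ} {κ : EE N → ℝ} (hκ : Adm n κ) {f : EE N → ℝ} {M : ℝ} (h : BM f M)
    (t : ℝ) (x : EE N) : Integrable (fun z => κ z * f (x + t • z)) := by
  refine hκ.int.mul_bdd (c := M) (h.comp x t).1.aestronglyMeasurable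
    (Eventually.of_forall fun z => (h.comp x t).2 z)

theorem Cv_abs_le {N n : ℕ} {κ : EE N → ℝ} (hκ : Adm n κ) {f : EE N → ℝ} {M : ℝ} (h : BM f M)
    (t : ℝ) (x : EE N) : |Cv κ t f x| ≤ (∫ z, |κ z|) * M := by
  rw [Cv, ← integral_mul_const]
  refine (abs_integral_le_integral_abs).trans (integral_mono (Cv_int hκ h t x).abs
    (hκ.int.abs.mul_const M) fun z => ?_)
  simp only [abs_mul]
  exact mul_le_mul_of_nonneg_left (h.2 _) (abs_nonneg _)

theorem Cv_sub {N n : ℕ} {κ : EE N → ℝ} (hκ : Adm n κ) {f g : EE N → ℝ} {M M' : ℝ} (h : BM f M)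
    (h' : BM g M') (t : ℝ) (x : EE N) :
    Cv κ t (fun z => f z - g z) x = Cv κ t f x - Cv κ t g x := by
  rw [Cv, Cv, Cv, ← integral_sub (Cv_int hκ h t x) (Cv_int hκ h' t x)]
  congr 1; ext z; ring

theorem Cv_add {N n : ℕ} {κ : EE N → ℝ} (hκ : Adm n κ) {f g : EE N → ℝ} {M M' : ℝ} (h : BM f M)
    (h' : BM g M') (t : ℝ) (x : EE N) :
    Cv κ t (fun z => f z + g z) x = Cv κ t f x + Cv κ t g x := by
  rw [Cv, Cv, Cv, ← integral_add (Cv_int hκ h t x) (Cv_int hκ h' t x)]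
  congr 1; ext z; ring

theorem Cv_cmul {N : ℕ} (κ : EE N → ℝ) (f : EE N → ℝ) (c t : ℝ) (x : EE N) :
    Cv κ t (fun z => c * f z) x = c * Cv κ t f x := by
  rw [Cv, Cv, ← integral_const_mul]
  congr 1; ext z; ring

theorem Cv_const {N : ℕ} (κ : EE N → ℝ) (c t : ℝ) (x : EE N) :
    Cv κ t (fun _ => c) x = (∫ z, κ z) * c := by
  rw [Cv, integral_mul_const]

theorem Cv_congr {N n : ℕ} {κ : EE N → ℝ} (hκ : Adm n κ) {f g : EE N → ℝ} {t : ℝ} (ht : 0 ≤ t)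
    {x : EE N} (h : ∀ y ∈ closedBall x t, f y = g y) : Cv κ t f x = Cv κ t g x := by
  rw [Cv, Cv]
  congr 1; ext z
  by_cases hz : 1 ≤ ‖z‖
  · simp [hκ.2 z hz]
  · push Not at hz
    rw [h]
    simp only [mem_closedBall, dist_self_add_left, norm_smul, Real.norm_of_nonneg ht]
    nlinarith

theorem Cv_mono {N n : ℕ} {κ : EE N → ℝ} (hκ : Adm n κ) (hnn : ∀ z, 0 ≤ κ z)
    {f g : EE N → ℝ} {M M' : ℝ} (h : BM f M) (h' : BM g M') {t : ℝ} (ht : 0 ≤ t)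
    {x : EE N} (hle : ∀ y ∈ closedBall x t, f y ≤ g y) : Cv κ t f x ≤ Cv κ t g x := by
  rw [Cv, Cv]
  refine integral_mono (Cv_int hκ h t x) (Cv_int hκ h' t x) fun z => ?_
  by_cases hz : 1 ≤ ‖z‖
  · simp [hκ.2 z hz]
  · push Not at hz
    refine mul_le_mul_of_nonneg_left (hle _ ?_) (hnn z)
    simp only [mem_closedBall, dist_self_add_left, norm_smul, Real.norm_of_nonneg ht]
    nlinarith

theorem Cv_meas {N n : ℕ} {κ : EE N → ℝ} (hκ : Adm n κ) {f : EE N → ℝ} (hf : Measurable f) :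
    StronglyMeasurable (fun p : ℝ × EE N => Cv κ p.1 f p.2) := by
  have : StronglyMeasurable (fun q : (ℝ × EE N) × EE N => κ q.2 * f (q.1.2 + q.1.1 • q.2)) := by
    apply Measurable.stronglyMeasurable
    exact (hκ.cont.measurable.comp measurable_snd).mul (hf.comp (by fun_prop))
  exact this.integral_prod_right

/-- rescaled kernel -/
def rk {N : ℕ} (κ : EE N → ℝ) (t : ℝ) (y : EE N) : ℝ := |(t ^ N)⁻¹| * κ (-(t⁻¹ • y))

theorem Cv_conv {N : ℕ} (κ : EE N → ℝ) (f : EE N → ℝ) {t : ℝ} (ht : t ≠ 0) :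
    Cv κ t f = convolution f (rk κ t) (ContinuousLinearMap.mul ℝ ℝ) volume := by
  ext x
  simp only [convolution, ContinuousLinearMap.mul_apply', rk]
  have h1 := Measure.integral_comp_smul (volume : Measure (EE N))
    (fun w => κ (t⁻¹ • w) * f (x + w)) t
  simp only [smul_smul, inv_mul_cancel₀ ht, one_smul, finrank_euclideanSpace, Fintype.card_fin] at h1
  rw [Cv, h1, smul_eq_mul, ← integral_const_mul]
  rw [← integral_sub_right_eq_self _ x]
  congr 1; ext y
  rw [show -(t⁻¹ • (x - y)) = t⁻¹ • (y - x) by rw [← smul_neg]; simp]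
  simp; ring

theorem rk_hcs {N n : ℕ} {κ : EE N → ℝ} (hκ : Adm n κ) {t : ℝ} (ht : t ≠ 0) :
    HasCompactSupport (rk κ t) := by
  have : HasCompactSupport (fun y : EE N => κ (-(t⁻¹ • y))) := by
    have h := hκ.hcs.comp_smul (c := -t⁻¹) (by simpa using ht)
    simpa using h
  exact this.mul_left

theorem rk_smooth {N n : ℕ} {κ : EE N → ℝ} (hκ : Adm n κ) (t : ℝ)  :
    ContDiff ℝ n (rk κ t) := by
  have := hκ.1
  exact contDiff_const.mul (hκ.1.comp (by fun_prop))

theorem Cv_contDiff {N n : ℕ} {κ : EE N → ℝ} (hκ : Adm n κ) {f : EE N → ℝ} {M : ℝ} (h : BM f M)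
    {t : ℝ} (ht : t ≠ 0) : ContDiff ℝ n (Cv κ t f) := by
  rw [Cv_conv κ f ht]
  exact (rk_hcs hκ ht).contDiff_convolution_right (n := (n : ℕ∞)) _ h.locInt (by exact_mod_cast rk_smooth hκ t)

theorem Adm.fderiv {N n : ℕ} {κ : EE N → ℝ} (hκ : Adm (n + 1) κ) (v : EE N) :
    Adm n (fun z => fderiv ℝ κ z v) := by
  refine ⟨(hκ.1.fderiv_right (m := n) (by exact_mod_cast le_rfl)).clm_apply contDiff_const, ?_⟩
  intro z hz
  have h1 : ∀ z : EE N, 1 < ‖z‖ → _root_.fderiv ℝ κ z = 0 := by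
    intro z hz
    have : κ =ᶠ[𝓝 z] fun _ => 0 := by
      filter_upwards [(isOpen_lt continuous_const continuous_norm).mem_nhds hz] with x hx
        using hκ.2 x (le_of_lt hx)
    rw [this.fderiv_eq]; simp
  have hc : Continuous (_root_.fderiv ℝ κ) := hκ.1.continuous_fderiv (by simp)
  rcases hz.lt_or_eq with h | h
  · simp [h1 z h]
  · have hz0 : z ≠ 0 := by intro h0; simp [h0] at h
    have ht : Tendsto (fun n : ℕ => _root_.fderiv ℝ κ ((1 + 1 / ((n : ℝ) + 1)) • z)) atTop
        (𝓝 (_root_.fderiv ℝ κ z)) := by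
      have h2 : Tendsto (fun n : ℕ => (1 + 1 / ((n : ℝ) + 1)) • z) atTop (𝓝 ((1 + 0 : ℝ) • z)) :=
        ((tendsto_one_div_add_atTop_nhds_zero_nat).const_add 1).smul_const z
      simp only [add_zero, one_smul] at h2
      exact (hc.tendsto z).comp h2
    have h3 : ∀ n : ℕ, _root_.fderiv ℝ κ ((1 + 1 / ((n : ℝ) + 1)) • z) = 0 := by
      intro n
      apply h1
      rw [norm_smul, ← h, mul_one, Real.norm_of_nonneg (by positivity)]
      have : 0 < 1 / ((n : ℝ) + 1) := by positivity
      linarith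
    simp only [h3] at ht
    have h4 := tendsto_nhds_unique ht tendsto_const_nhds
    show _root_.fderiv ℝ κ z v = 0
    rw [h4]; simp

theorem Cv_fderiv {N n : ℕ} {κ : EE N → ℝ} (hκ : Adm (n + 1) κ) {f : EE N → ℝ} {M : ℝ} (h : BM f M)
    {t : ℝ} (ht : t ≠ 0) (x v : EE N) :
    fderiv ℝ (Cv κ t f) x v = -t⁻¹ * Cv (fun z => fderiv ℝ κ z v) t f x := by
  have h1 : ContDiff ℝ 1 (rk κ t) := (rk_smooth hκ t).of_le (by exact_mod_cast (by omega))
  have hk1 : Differentiable ℝ κ := hκ.1.differentiable (by simp)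
  have := ((rk_hcs hκ ht).hasFDerivAt_convolution_right (ContinuousLinearMap.mul ℝ ℝ) h.locInt h1 x)
  rw [Cv_conv κ f ht, this.fderiv, convolution_precompR_apply _ h.locInt ((rk_hcs hκ ht).fderiv ℝ)
    (h1.continuous_fderiv one_ne_zero), ← Cv_cmul, Cv_conv _ _ ht]
  have e : (fun a => fderiv ℝ (rk κ t) a v) = fun y => -t⁻¹ * rk (fun z => fderiv ℝ κ z v) t y := by
    ext y
    have : HasFDerivAt (fun y : EE N => -(t⁻¹ • y)) (-(t⁻¹ • ContinuousLinearMap.id ℝ (EE N))) y :=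
      ((hasFDerivAt_id y).const_smul t⁻¹).neg
    have h2 := (((hk1 (-(t⁻¹ • y))).hasFDerivAt.comp y this).const_mul |(t ^ N)⁻¹|)
    have h3 : fderiv ℝ (rk κ t) y = _ := h2.fderiv
    rw [h3]; simp [rk]; ring
  rw [e]
  simp only [convolution, ContinuousLinearMap.mul_apply']
  congr 1; ext y; ring


/-- potential operator -/
def VV {N : ℕ} (k : Ker N) (T : ℝ) (f : EE N → ℝ) (x : EE N) : ℝ :=
  ∫ t in (0 : ℝ)..T, t * Cv k.σ t f x

/-- derivative density of the potential operator -/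
def DD {N : ℕ} (k : Ker N) (t : ℝ) (f : EE N → ℝ) (x : EE N) : EE N →L[ℝ] ℝ :=
  ∫ z, (k.ρ z * f (x + t • z)) • innerSL ℝ z

theorem ibp {N n : ℕ} {κ : EE N → ℝ} (hκ : Adm (n + 1) κ) {g : EE N → ℝ} (hg : ContDiff ℝ 1 g)
    (t : ℝ) (x v : EE N) :
    Cv (fun z => fderiv ℝ κ z v) t g x = -t * Cv κ t (fun y => fderiv ℝ g y v) x := by
  have hgd : Differentiable ℝ g := hg.differentiable one_ne_zero
  have hκd : Differentiable ℝ κ := hκ.1.differentiable (by simp)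
  have hcf : Continuous (fun y => fderiv ℝ g y v) :=
    (hg.continuous_fderiv one_ne_zero).clm_apply continuous_const
  have e : ∀ z, fderiv ℝ (fun z => g (x + t • z)) z v = t * fderiv ℝ g (x + t • z) v := by
    intro z
    have h1 : HasFDerivAt (fun z : EE N => x + t • z) (t • ContinuousLinearMap.id ℝ (EE N)) z :=
      ((hasFDerivAt_id z).const_smul t).const_add x
    have h2 : HasFDerivAt (fun z => g (x + t • z)) ((fderiv ℝ g (x + t • z)).comp
      (t • ContinuousLinearMap.id ℝ (EE N))) z := (hgd (x + t • z)).hasFDerivAt.comp z h1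
    rw [h2.fderiv]
    simp
  have hc : Continuous (fun z => g (x + t • z)) := hg.continuous.comp (by fun_prop)
  have := integral_mul_fderiv_eq_neg_fderiv_mul_of_integrable (μ := volume) (f := κ)
    (g := fun z => g (x + t • z)) (v := v)
    (((hκ.fderiv v).cont.mul hc).integrable_of_hasCompactSupport (hκ.fderiv v).hcs.mul_right)
    (by
      simp only [e]
      exact (hκ.cont.mul (continuous_const.mul (hcf.comp (by fun_prop)))).integrable_of_hasCompactSupport
        hκ.hcs.mul_right)
    ((hκ.cont.mul hc).integrable_of_hasCompactSupport hκ.hcs.mul_right)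
    (fun z _ => hκd z) (fun z _ => (hgd _).comp z (by fun_prop))
  simp only [e] at this
  rw [Cv, Cv, ← neg_eq_iff_eq_neg.2 this, ← integral_const_mul, ← integral_neg]
  congr 1; ext z; ring

theorem Vint {N n : ℕ} {κ : EE N → ℝ} (hκ : Adm n κ) {f : EE N → ℝ} {M : ℝ} (h : BM f M) (x : EE N)
    (T : ℝ) : IntervalIntegrable (fun t => Cv κ t f x) volume 0 T := by
  have hm : StronglyMeasurable (fun t : ℝ => Cv κ t f x) :=
    (Cv_meas hκ h.1).comp_measurable (g := fun t : ℝ => (t, x)) (by fun_prop)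
  refine (intervalIntegrable_const (c := (∫ z, |κ z|) * M)).mono_fun hm.aestronglyMeasurable ?_
  refine Eventually.of_forall fun t => ?_
  exact (Cv_abs_le hκ h t x).trans (le_abs_self _)

theorem Vint' {N n : ℕ} {κ : EE N → ℝ} (hκ : Adm n κ) {f : EE N → ℝ} {M : ℝ} (h : BM f M) (x : EE N)
    (T : ℝ) : IntervalIntegrable (fun t => t * Cv κ t f x) volume 0 T :=
  (Vint hκ h x T).continuousOn_mul continuousOn_id

theorem DD_int {N : ℕ} (k : Ker N) {f : EE N → ℝ} {M : ℝ} (h : BM f M) (t : ℝ) (x : EE N) :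
    Integrable (fun z => (k.ρ z * f (x + t • z)) • innerSL ℝ z) := by
  have h1 : Integrable (fun z => k.ρ z • innerSL ℝ z) := by
    refine Continuous.integrable_of_hasCompactSupport
      (k.admρ.cont.smul (innerSL ℝ).continuous) (k.admρ.hcs.smul_right)
  have := h1.bdd_smul M (h.comp x t).1.aestronglyMeasurable
    (Eventually.of_forall fun z => (h.comp x t).2 z)
  refine this.congr (Eventually.of_forall fun z => ?_)
  simp only [Pi.smul_apply', smul_smul, mul_comm]

theorem DD_apply {N : ℕ} (k : Ker N) {f : EE N → ℝ} {M : ℝ} (h : BM f M) (t : ℝ) (x v : EE N) :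
    DD k t f x v = - Cv (fun z => fderiv ℝ k.σ z v) t f x := by
  rw [DD, ContinuousLinearMap.integral_apply (DD_int k h t x), Cv, ← integral_neg]
  congr 1; ext z
  rw [(k.deriv z).fderiv]; simp; ring

theorem DD_norm {N : ℕ} (k : Ker N) {f : EE N → ℝ} {M : ℝ} (h : BM f M) (t : ℝ) (x : EE N) :
    ‖DD k t f x‖ ≤ M := by
  have : M = ∫ z, k.ρ z * M := by rw [integral_mul_const, k.ρ_int, one_mul]
  rw [this]
  refine norm_integral_le_of_norm_le (k.admρ.int.mul_const M) (Eventually.of_forall fun z => ?_)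
  rw [norm_smul, innerSL_apply_norm, norm_mul, Real.norm_of_nonneg (k.ρ_nn z)]
  by_cases hz : 1 ≤ ‖z‖
  · simp [k.ρ_supp z hz]
  · push Not at hz
    have h1 : ‖f (x + t • z)‖ ≤ M := h.2 _
    have h2 := k.ρ_nn z
    have h3 := h.nonneg
    calc k.ρ z * ‖f (x + t • z)‖ * ‖z‖ ≤ k.ρ z * M * 1 := by gcongr
      _ = _ := by ring

theorem tCv_hasFDerivAt {N : ℕ} (k : Ker N) {f : EE N → ℝ} {M : ℝ} (h : BM f M) {t : ℝ}
    (ht : t ≠ 0) (x : EE N) : HasFDerivAt (fun x => t * Cv k.σ t f x) (DD k t f x) x := by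
  have h1 : DifferentiableAt ℝ (Cv k.σ t f) x :=
    (Cv_contDiff k.admσ h ht).differentiable (by simp) x
  refine (h1.hasFDerivAt.const_mul t).congr_fderiv ?_
  ext v
  rw [DD_apply k h]
  simp only [smul_apply, smul_eq_mul]
  rw [Cv_fderiv (n := 3) k.admσ h ht]
  field_simp

theorem DD_cont {N : ℕ} (k : Ker N) {f : EE N → ℝ} {M : ℝ} (h : BM f M) {t : ℝ}
    (ht : t ≠ 0) : Continuous (DD k t f) := by
  have : DD k t f = fderiv ℝ (fun x => t * Cv k.σ t f x) := by
    ext1 x; exact (tCv_hasFDerivAt k h ht x).fderiv.symm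
  rw [this]
  exact (contDiff_const.mul (Cv_contDiff k.admσ h ht)).continuous_fderiv (by simp)

theorem DD_meas {N : ℕ} (k : Ker N) {f : EE N → ℝ} {M : ℝ} (h : BM f M) (x : EE N) :
    StronglyMeasurable (fun t => DD k t f x) := by
  have h1 : StronglyMeasurable (fun q : ℝ × EE N => (k.ρ q.2 * f (x + q.1 • q.2)) • innerSL ℝ q.2) := by
    have a1 : StronglyMeasurable (fun q : ℝ × EE N => (k.ρ q.2 * f (x + q.1 • q.2))) := by
      apply Measurable.stronglyMeasurable
      exact (k.admρ.cont.measurable.comp measurable_snd).mul (h.1.comp (by fun_prop))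
    have a2 : StronglyMeasurable (fun q : ℝ × EE N => (innerSL ℝ q.2 : EE N →L[ℝ] ℝ)) :=
      Continuous.stronglyMeasurable (by fun_prop)
    exact a1.smul a2
  exact h1.integral_prod_right

theorem DD_ii {N : ℕ} (k : Ker N) {f : EE N → ℝ} {M : ℝ} (h : BM f M) (x : EE N) (T : ℝ) :
    IntervalIntegrable (fun t => DD k t f x) volume 0 T := by
  refine (intervalIntegrable_const (c := M)).mono_fun (DD_meas k h x).aestronglyMeasurable ?_
  exact Eventually.of_forall fun t => (DD_norm k h t x).trans (le_abs_self _)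

theorem V_hasFDerivAt {N : ℕ} (k : Ker N) {f : EE N → ℝ} {M : ℝ} (h : BM f M) {T : ℝ} (hT : 0 ≤ T)
    (x : EE N) : HasFDerivAt (VV k T f) (∫ t in (0 : ℝ)..T, DD k t f x) x := by
  refine intervalIntegral.hasFDerivAt_integral_of_dominated_of_fderiv_le (𝕜 := ℝ) (F := fun x t => t * Cv k.σ t f x)
    (F' := fun x t => DD k t f x) (s := univ) (bound := fun _ => M)
    univ_mem (Eventually.of_forall fun y => ?_) (Vint' k.admσ h x T) ?_ ?_ intervalIntegrable_const ?_
  · rw [uIoc_of_le hT]; exact (Vint' k.admσ h y T).1.1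
  · rw [uIoc_of_le hT]; exact (DD_ii k h x T).1.1
  · exact Eventually.of_forall fun t _ y _ => DD_norm k h t y
  · refine Eventually.of_forall fun t ht y _ => tCv_hasFDerivAt k h ?_ y
    rw [uIoc_of_le hT] at ht
    exact ht.1.ne'

theorem V_contDiff_one {N : ℕ} (k : Ker N) {f : EE N → ℝ} {M : ℝ} (h : BM f M) {T : ℝ}
    (hT : 0 ≤ T) : ContDiff ℝ 1 (VV k T f) := by
  refine contDiff_one_iff_fderiv.2 ⟨fun x => (V_hasFDerivAt k h hT x).differentiableAt, ?_⟩
  have : fderiv ℝ (VV k T f) = fun x => ∫ t in (0 : ℝ)..T, DD k t f x := by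
    ext1 x; exact (V_hasFDerivAt k h hT x).fderiv
  rw [this]
  refine intervalIntegral.continuous_of_dominated_interval (bound := fun _ => M) ?_ ?_
    intervalIntegrable_const ?_
  · intro y; rw [uIoc_of_le hT]; exact (DD_ii k h y T).1.1
  · exact fun y => Eventually.of_forall fun t _ => DD_norm k h t y
  · refine Eventually.of_forall fun t ht => ?_
    rw [uIoc_of_le hT] at ht
    exact DD_cont k h ht.1.ne'

theorem V_fderiv {N : ℕ} (k : Ker N) {f : EE N → ℝ} (hf : ContDiff ℝ 1 f) (hc : HasCompactSupport f)
    {T : ℝ} (hT : 0 ≤ T) (x v : EE N) :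
    fderiv ℝ (VV k T f) x v = VV k T (fun y => fderiv ℝ f y v) x := by
  obtain ⟨M, hM, h⟩ := BM.of_hcs hf.continuous hc
  rw [(V_hasFDerivAt k h hT x).fderiv, ContinuousLinearMap.intervalIntegral_apply (DD_ii k h x T), VV]
  congr 1; ext t
  rw [DD_apply k h, ibp (n := 3) k.admσ hf]; ring

theorem V_contDiff_two {N : ℕ} (k : Ker N) {f : EE N → ℝ} (hf : ContDiff ℝ 1 f)
    (hc : HasCompactSupport f) {T : ℝ} (hT : 0 ≤ T) : ContDiff ℝ 2 (VV k T f) := by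
  obtain ⟨M, hM, h⟩ := BM.of_hcs hf.continuous hc
  have : ContDiff ℝ (1 + 1) (VV k T f) := by
    refine contDiff_succ_iff_fderiv_apply.2
      ⟨fun x => (V_hasFDerivAt k h hT x).differentiableAt, by simp, fun v => ?_⟩
    simp only [V_fderiv k hf hc hT]
    obtain ⟨M', hM', h'⟩ := BM.of_hcs
      (f := fun y => fderiv ℝ f y v) ((hf.continuous_fderiv one_ne_zero).clm_apply continuous_const)
      (hc.fderiv_apply ℝ v)
    exact V_contDiff_one k h' hT
  norm_num at this
  exact this

theorem V_congr {N : ℕ} (k : Ker N) {f g : EE N → ℝ} {T : ℝ} (hT : 0 ≤ T)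
    {x : EE N} (h : ∀ y ∈ closedBall x T, f y = g y) : VV k T f x = VV k T g x := by
  refine intervalIntegral.integral_congr fun t ht => ?_
  rw [uIcc_of_le hT] at ht
  rw [Cv_congr k.admσ ht.1 fun y hy => h y (closedBall_subset_closedBall ht.2 hy)]

theorem V_mono {N : ℕ} (k : Ker N) {f g : EE N → ℝ} {M M' : ℝ} (hf : BM f M) (hg : BM g M')
    {T : ℝ} (hT : 0 ≤ T) {x : EE N} (h : ∀ y ∈ closedBall x T, f y ≤ g y) :
    VV k T f x ≤ VV k T g x := by
  refine intervalIntegral.integral_mono_on hT (Vint' k.admσ hf x T) (Vint' k.admσ hg x T) ?_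
  intro t ht
  exact mul_le_mul_of_nonneg_left (Cv_mono k.admσ k.σ_nn hf hg ht.1
    fun y hy => h y (closedBall_subset_closedBall ht.2 hy)) ht.1

theorem V_sub {N : ℕ} (k : Ker N) {f g : EE N → ℝ} {M M' : ℝ} (hf : BM f M) (hg : BM g M')
    (T : ℝ) (x : EE N) : VV k T (fun z => f z - g z) x = VV k T f x - VV k T g x := by
  rw [VV, VV, VV, ← intervalIntegral.integral_sub (Vint' k.admσ hf x T) (Vint' k.admσ hg x T)]
  congr 1; ext t; rw [Cv_sub k.admσ hf hg]; ring

theorem V_cmul {N : ℕ} (k : Ker N) (f : EE N → ℝ) (c : ℝ)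
    (T : ℝ) (x : EE N) : VV k T (fun z => c * f z) x = c * VV k T f x := by
  rw [VV, VV, ← intervalIntegral.integral_const_mul]
  congr 1; ext t; rw [Cv_cmul]; ring

/-- the constant of the kernel -/
def Ker.c {N : ℕ} (k : Ker N) : ℝ := (∫ z, k.σ z) / 2

theorem Ker.c_pos {N : ℕ} (k : Ker N) : 0 < k.c := half_pos k.σ_int

theorem V_const {N : ℕ} (k : Ker N) (a : ℝ)
    (T : ℝ) (x : EE N) : VV k T (fun _ => a) x = k.c * T ^ 2 * a := by
  simp only [VV, Cv_const]
  rw [intervalIntegral.integral_mul_const]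
  simp [Ker.c]; ring

theorem VP {N : ℕ} (k : Ker N) {w : EE N → ℝ} (hw : ContDiff ℝ 2 w) (hc : HasCompactSupport w)
    (T : ℝ) (x : EE N) : w x = Cv k.ρ T w x + VV k T (fun y => - lapl w y) x := by
  set e : Fin N → EE N := fun i => EuclideanSpace.single i 1
  have hw1 : ContDiff ℝ 1 w := hw.of_le (by norm_num)
  have hcf : Continuous (fderiv ℝ w) := hw.continuous_fderiv (by norm_num)
  have hwd : Differentiable ℝ w := hw.differentiable (by norm_num)
  have hp : ∀ i, ContDiff ℝ 1 (fun y => fderiv ℝ w y (e i)) := fun i =>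
    (hw.fderiv_right (m := 1) (by norm_num)).clm_apply contDiff_const
  have hpc : ∀ i, HasCompactSupport (fun y => fderiv ℝ w y (e i)) := fun i => hc.fderiv_apply ℝ (e i)
  have hpp : ∀ i, Continuous (fun y => fderiv ℝ (fun y => fderiv ℝ w y (e i)) y (e i)) := fun i =>
    ((hp i).continuous_fderiv one_ne_zero).clm_apply continuous_const
  have hppc : ∀ i, HasCompactSupport (fun y => fderiv ℝ (fun y => fderiv ℝ w y (e i)) y (e i)) :=
    fun i => (hpc i).fderiv_apply ℝ (e i)
  obtain ⟨M, hM, hB⟩ := BM.of_hcs hw.continuous hc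
  obtain ⟨C, hC⟩ := hcf.bounded_above_of_compact_support (hc.fderiv ℝ)
  have hlc : Continuous (lapl w) := continuous_finsetSum _ fun i _ => hpp i
  have hlcs : HasCompactSupport (lapl w) := by
    rw [hasCompactSupport_def]
    refine HasCompactSupport.intro (K := ⋃ i, tsupport (fun y => fderiv ℝ (fun y => fderiv ℝ w y (e i)) y (e i)))
      (isCompact_iUnion fun i => hppc i) ?_
    intro x hx
    simp only [mem_iUnion, not_exists] at hx
    exact Finset.sum_eq_zero fun i _ => image_eq_zero_of_notMem_tsupport
      (f := fun y => fderiv ℝ (fun y => fderiv ℝ w y (e i)) y (e i)) (hx i)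
  obtain ⟨ML, hML, hBL⟩ := BM.of_hcs hlc hlcs
  have hder : ∀ t, HasDerivAt (fun t => Cv k.ρ t w x) (t * Cv k.σ t (lapl w) x) t := by
    intro t
    have h1 := (hasDerivAt_integral_of_dominated_loc_of_deriv_le (μ := (volume : Measure (EE N)))
      (F := fun t z => k.ρ z * w (x + t • z))
      (F' := fun t z => k.ρ z * fderiv ℝ w (x + t • z) z)
      (bound := fun z => k.ρ z * (C * ‖z‖)) (s := univ) (x₀ := t) univ_mem
      (Eventually.of_forall fun s => (Cv_int k.admρ hB s x).1) (Cv_int k.admρ hB t x)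
      (by
        refine Continuous.aestronglyMeasurable ?_
        exact k.admρ.cont.mul ((hcf.comp (by fun_prop)).clm_apply continuous_id))
      (Eventually.of_forall fun z s _ => by
        rw [norm_mul, Real.norm_of_nonneg (k.ρ_nn z)]
        refine mul_le_mul_of_nonneg_left ?_ (k.ρ_nn z)
        exact ((fderiv ℝ w (x + s • z)).le_opNorm z).trans
          (mul_le_mul_of_nonneg_right (hC _) (norm_nonneg _)))
      (Continuous.integrable_of_hasCompactSupport (k.admρ.cont.mul (by fun_prop)) k.admρ.hcs.mul_right)
      (Eventually.of_forall fun z s _ => by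
        refine HasDerivAt.const_mul _ ?_
        have : HasDerivAt (fun s : ℝ => x + s • z) z s := by
          simpa using ((hasDerivAt_id s).smul_const z).const_add x
        exact (hwd _).hasFDerivAt.comp_hasDerivAt s this)).2
    refine h1.congr_deriv ?_
    have e1 : ∀ z, k.ρ z * fderiv ℝ w (x + t • z) z
        = ∑ i, - (fderiv ℝ k.σ z (e i) * fderiv ℝ w (x + t • z) (e i)) := by
      intro z
      have hz : z = ∑ i, z i • e i := by
        simpa [e] using ((EuclideanSpace.basisFun (Fin N) ℝ).sum_repr z).symm
      have hs : fderiv ℝ w (x + t • z) z = ∑ i, z i * fderiv ℝ w (x + t • z) (e i) := by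
        conv_lhs => rw [show (fderiv ℝ w (x + t • z)) z = (fderiv ℝ w (x + t • z)) (∑ i, z i • e i) from
          congrArg _ hz]
        simp
      rw [hs, Finset.mul_sum]
      refine Finset.sum_congr rfl fun i _ => ?_
      rw [(k.deriv z).fderiv]
      simp [e, EuclideanSpace.inner_single_right]
      ring
    simp only [e1]
    have e2 : ∀ i, Integrable (fun z => fderiv ℝ k.σ z (e i) * fderiv ℝ w (x + t • z) (e i)) := by
      intro i
      obtain ⟨M', hM', hB'⟩ := BM.of_hcs (hp i).continuous (hpc i)
      exact Cv_int (n := 3) (Adm.fderiv (n := 3) k.admσ (e i)) hB' t x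
    rw [integral_finsetSum (f := fun i z => - (fderiv ℝ k.σ z (e i) * fderiv ℝ w (x + t • z) (e i))) _ fun i _ => (e2 i).neg]
    have e3 : ∀ i, ∫ z, - (fderiv ℝ k.σ z (e i) * fderiv ℝ w (x + t • z) (e i))
        = t * Cv k.σ t (fun y => fderiv ℝ (fun y => fderiv ℝ w y (e i)) y (e i)) x := by
      intro i
      rw [integral_neg]
      have := ibp (n := 3) k.admσ (hp i) t x (e i)
      rw [Cv] at this
      rw [this]; ring
    simp only [e3]
    rw [← Finset.mul_sum]
    congr 1
    simp only [Cv]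
    rw [← integral_finsetSum]
    · congr 1; ext z; rw [← Finset.mul_sum]; rfl
    · intro i _
      obtain ⟨M', hM', hB'⟩ := BM.of_hcs (hpp i) (hppc i)
      exact Cv_int k.admσ hB' t x
  have := intervalIntegral.integral_eq_sub_of_hasDerivAt (fun t _ => hder t) (Vint' k.admσ hBL x T)
  have e0 : Cv k.ρ 0 w x = w x := by
    simp only [Cv, zero_smul, add_zero]
    rw [integral_mul_const, k.ρ_int, one_mul]
  rw [e0] at this
  have e4 : VV k T (fun y => - lapl w y) x = - VV k T (lapl w) x := by
    have := V_cmul k (lapl w) (-1) T x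
    simpa using this
  rw [e4]
  have e5 : VV k T (lapl w) x = Cv k.ρ T w x - w x := this
  linarith


theorem cutoff {N : ℕ} {K Ω : Set (EE N)} (hK : IsCompact K) (ho : IsOpen Ω) (hKΩ : K ⊆ Ω) :
    ∃ (χ : EE N → ℝ) (L : Set (EE N)), ContDiff ℝ 2 χ ∧ IsCompact L ∧ L ⊆ Ω ∧ (∀ x, x ∉ L → χ x = 0) ∧
      (∀ᶠ x in 𝓝ˢ K, χ x = 1) := by
  obtain ⟨L, hL, hKL, hLΩ⟩ := exists_compact_between hK ho hKΩ
  obtain ⟨f, h1, h0, -⟩ := exists_contMDiffMap_one_nhds_of_subset_interior (n := 2)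
    (modelWithCornersSelf ℝ (EE N)) hK.isClosed hKL
  exact ⟨f, L, contMDiff_iff_contDiff.1 f.2, hL, hLΩ, h0, h1⟩

theorem loc {N n : ℕ} (hn : n ≤ 2) {K Ω : Set (EE N)} (hK : IsCompact K) (ho : IsOpen Ω) (hKΩ : K ⊆ Ω)
    {w : EE N → ℝ} (hw : ContDiffOn ℝ n w Ω) :
    ∃ w' : EE N → ℝ, ContDiff ℝ n w' ∧ HasCompactSupport w' ∧ ∀ᶠ x in 𝓝ˢ K, w' x = w x := by
  obtain ⟨χ, L, hχ, hL, hLΩ, h0, h1⟩ := cutoff hK ho hKΩ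
  refine ⟨fun x => χ x * w x, contDiff_iff_contDiffAt.2 fun x => ?_, ?_, ?_⟩
  · by_cases hx : x ∈ Ω
    · exact ((hχ.contDiffAt).of_le (by exact_mod_cast hn)).mul (hw.contDiffAt (ho.mem_nhds hx))
    · have : (fun x => χ x * w x) =ᶠ[𝓝 x] fun _ => 0 := by
        filter_upwards [hL.isClosed.isOpen_compl.mem_nhds (fun h => hx (hLΩ h))] with y hy
        rw [h0 y hy, zero_mul]
      exact contDiffAt_const.congr_of_eventuallyEq this
  · exact HasCompactSupport.intro hL fun x hx => by rw [h0 x hx, zero_mul]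
  · filter_upwards [h1] with x hx
    rw [hx, one_mul]

theorem lapl_cont {N : ℕ} {w : EE N → ℝ} (hw : ContDiff ℝ 2 w) : Continuous (lapl w) := by
  refine continuous_finsetSum _ fun i _ => ?_
  have : ContDiff ℝ 1 (fun y => fderiv ℝ w y (EuclideanSpace.single i 1)) :=
    (hw.fderiv_right (m := 1) (by norm_num)).clm_apply contDiff_const
  exact (this.continuous_fderiv one_ne_zero).clm_apply continuous_const

theorem lapl_congr {N : ℕ} {w w' : EE N → ℝ} {x : EE N} (h : w =ᶠ[𝓝 x] w') : lapl w x = lapl w' x := by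
  refine Finset.sum_congr rfl fun i _ => ?_
  have : (fun y => fderiv ℝ w y (EuclideanSpace.single i 1)) =ᶠ[𝓝 x]
      fun y => fderiv ℝ w' y (EuclideanSpace.single i 1) := by
    filter_upwards [h.fderiv (𝕜 := ℝ)] with y hy
    rw [hy]
  rw [this.fderiv_eq]

theorem lapl_hcs {N : ℕ} {w : EE N → ℝ} (hc : HasCompactSupport w) : HasCompactSupport (lapl w) := by
  refine HasCompactSupport.intro hc (fun x hx => ?_)
  have : w =ᶠ[𝓝 x] fun _ => 0 := by
    filter_upwards [(isClosed_tsupport w).isOpen_compl.mem_nhds hx] with y hy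
    exact image_eq_zero_of_notMem_tsupport hy
  rw [lapl_congr this]
  simp [lapl]

/-- mean value form of the Poisson equation -/
def MV {N : ℕ} (k : Ker N) (Ω : Set (EE N)) (u f : EE N → ℝ) : Prop :=
  ∀ x T, 0 < T → closedBall x T ⊆ Ω → u x = Cv k.ρ T u x + VV k T f x

theorem MV.congr {N : ℕ} {k : Ker N} {Ω : Set (EE N)} {u u' f f' : EE N → ℝ} (h : MV k Ω u f)
    (hu : ∀ x ∈ Ω, u x = u' x) (hf : ∀ x ∈ Ω, f x = f' x) : MV k Ω u' f' := by
  intro x T hT hb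
  rw [← hu x (hb (mem_closedBall_self hT.le)), h x T hT hb,
    Cv_congr k.admρ hT.le fun y hy => hu y (hb hy), V_congr k hT.le fun y hy => hf y (hb hy)]

theorem MV_of_classical {N : ℕ} (k : Ker N) {Ω : Set (EE N)} (ho : IsOpen Ω) {w g : EE N → ℝ}
    (hw : ContDiffOn ℝ 2 w Ω) (hl : ∀ x ∈ Ω, -lapl w x = g x) : MV k Ω w g := by
  intro x T hT hb
  obtain ⟨w', hw', hc, hev⟩ := loc (n := 2) le_rfl (isCompact_closedBall x T) ho hb hw
  have h1 : ∀ y ∈ closedBall x T, w' y = w y := fun y hy => hev.self_of_nhdsSet y hy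
  rw [← h1 x (mem_closedBall_self hT.le), VP k hw' hc T x, Cv_congr k.admρ hT.le h1]
  congr 1
  refine V_congr k hT.le fun y hy => ?_
  rw [← hl y (hb hy), lapl_congr (eventually_nhdsSet_iff_forall.1 hev y hy)]

/-- continuous functions vanishing off a set -/
def C0 {N : ℕ} (Ω : Set (EE N)) (u : EE N → ℝ) : Prop := Continuous u ∧ ∀ x, x ∉ Ω → u x = 0

theorem C0.hcs {N : ℕ} {Ω : Set (EE N)} {u : EE N → ℝ} (h : C0 Ω u) (hb : Bornology.IsBounded Ω) :
    HasCompactSupport u :=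
  HasCompactSupport.intro (hb.isCompact_closure) fun x hx => h.2 x fun h' => hx (subset_closure h')

theorem C0.bm {N : ℕ} {Ω : Set (EE N)} {u : EE N → ℝ} (h : C0 Ω u) (hb : Bornology.IsBounded Ω) :
    ∃ M, 0 ≤ M ∧ BM u M := BM.of_hcs h.1 (h.hcs hb)

theorem C0.of_closure {N : ℕ} {Ω : Set (EE N)} {u : EE N → ℝ}
    (hc : ContinuousOn u (closure Ω)) (h0 : ∀ x ∈ frontier Ω, u x = 0) : C0 Ω (Ω.indicator u) :=
  ⟨continuous_indicator h0 hc, fun x hx => indicator_of_notMem hx u⟩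

theorem C0.min {N : ℕ} {Ω : Set (EE N)} {w : EE N → ℝ} (h : C0 Ω w) (hb : Bornology.IsBounded Ω)
    {x₀ : EE N} (h0 : w x₀ < 0) : ∃ x ∈ Ω, w x < 0 ∧ ∀ y, w x ≤ w y := by
  obtain ⟨x, hx⟩ := h.1.exists_forall_le_of_hasCompactSupport (h.hcs hb)
  have : w x < 0 := (hx x₀).trans_lt h0
  exact ⟨x, by_contra fun hn => this.ne (h.2 x hn), this, hx⟩

theorem compar {N : ℕ} {k : Ker N} {Ω : Set (EE N)} (ho : IsOpen Ω) (hb : Bornology.IsBounded Ω)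
    {ξ : EE N → ℝ} (hξ : C0 Ω ξ) (hξm : MV k Ω ξ fun _ => 1) {u v f g : EE N → ℝ} {M M' : ℝ}
    (hu : C0 Ω u) (hv : C0 Ω v) (hf : BM f M) (hg : BM g M') (huf : MV k Ω u f) (hvg : MV k Ω v g)
    (hle : ∀ x ∈ Ω, f x ≤ g x) (x : EE N) : u x ≤ v x := by
  obtain ⟨Mu, -, hMu⟩ := hu.bm hb
  obtain ⟨Mv, -, hMv⟩ := hv.bm hb
  obtain ⟨Mξ, -, hMξ⟩ := hξ.bm hb
  have key : ∀ ε : ℝ, 0 < ε → ∀ x, 0 ≤ v x - u x + ε * ξ x := by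
    intro ε hε x
    by_contra hneg
    push Not at hneg
    set w : EE N → ℝ := fun x => v x - u x + ε * ξ x
    have hw : C0 Ω w := ⟨(hv.1.sub hu.1).add (continuous_const.mul hξ.1), fun x hx => by
      simp [w, hv.2 x hx, hu.2 x hx, hξ.2 x hx]⟩
    obtain ⟨y, hy, hy0, hmin⟩ := hw.min hb (x₀ := x) hneg
    obtain ⟨T, hT, hTb⟩ := Metric.nhds_basis_closedBall.mem_iff.1 (ho.mem_nhds hy)
    have e1 : w y = Cv k.ρ T w y + (VV k T g y - VV k T f y + ε * (k.c * T ^ 2 * 1)) := by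
      simp only [w]
      rw [Cv_add k.admρ (hMv.sub hMu) (hMξ.cmul ε), Cv_sub k.admρ hMv hMu, Cv_cmul,
        ← V_const k 1 T y]
      have := huf y T hT hTb
      have := hvg y T hT hTb
      have := hξm y T hT hTb
      linear_combination hvg y T hT hTb - huf y T hT hTb + ε * hξm y T hT hTb
    have e2 : VV k T f y ≤ VV k T g y := V_mono k hf hg hT.le fun z hz => hle z (hTb hz)
    have e3 : w y ≤ Cv k.ρ T w y := by
      have := Cv_mono k.admρ k.ρ_nn (BM.const (w y)) ((hMv.sub hMu).add (hMξ.cmul ε)) hT.le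
        (x := y) fun z _ => hmin z
      rwa [Cv_const, k.ρ_int, one_mul] at this
    have e4 : 0 < ε * (k.c * T ^ 2 * 1) := by have := k.c_pos; positivity
    linarith
  by_contra hlt
  push Not at hlt
  have h1 := hMξ.2 x
  have h2 := key ((u x - v x) / (2 * (Mξ + 1))) (by have := hMξ.nonneg; apply div_pos <;> linarith) x
  have h3 : (u x - v x) / (2 * (Mξ + 1)) * ξ x ≤ (u x - v x) / (2 * (Mξ + 1)) * (Mξ + 1) := by
    refine mul_le_mul_of_nonneg_left ?_ ?_
    · have := le_abs_self (ξ x); linarith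
    · have := hMξ.nonneg; apply div_nonneg <;> linarith
  have h4 : (u x - v x) / (2 * (Mξ + 1)) * (Mξ + 1) = (u x - v x) / 2 := by
    have := hMξ.nonneg; field_simp
  linarith

theorem MV.near {N : ℕ} {k : Ker N} {Ω : Set (EE N)} (ho : IsOpen Ω) {u g : EE N → ℝ}
    (h : MV k Ω u g) {x₀ : EE N} (hx : x₀ ∈ Ω) :
    ∃ T, 0 < T ∧ closedBall x₀ (2 * T) ⊆ Ω ∧
      ∀ᶠ x in 𝓝 x₀, closedBall x T ⊆ closedBall x₀ (2 * T) ∧ u x = Cv k.ρ T u x + VV k T g x := by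
  obtain ⟨r, hr, hb⟩ := Metric.nhds_basis_closedBall.mem_iff.1 (ho.mem_nhds hx)
  refine ⟨r / 2, by positivity, by simpa [mul_div_cancel₀] using hb, ?_⟩
  filter_upwards [ball_mem_nhds x₀ (half_pos hr)] with x hx
  have h1 : closedBall x (r / 2) ⊆ closedBall x₀ (2 * (r / 2)) := by
    apply closedBall_subset_closedBall'
    have := mem_ball.1 hx
    linarith
  refine ⟨h1, h x _ (by positivity) (h1.trans (by simpa [mul_div_cancel₀] using hb))⟩

theorem MV.reg1 {N : ℕ} {k : Ker N} {Ω : Set (EE N)} (ho : IsOpen Ω) {u g : EE N → ℝ} {M M' : ℝ}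
    (hu : BM u M) (hg : BM g M') (h : MV k Ω u g) : ContDiffOn ℝ 1 u Ω := by
  intro x₀ hx
  obtain ⟨T, hT, -, hev⟩ := h.near ho hx
  have : ContDiff ℝ 1 (fun x => Cv k.ρ T u x + VV k T g x) :=
    ((Cv_contDiff k.admρ hu hT.ne').of_le (by norm_num)).add (V_contDiff_one k hg hT.le)
  exact (this.contDiffAt.congr_of_eventuallyEq (hev.mono fun x hx => hx.2)).contDiffWithinAt

theorem MV.reg2 {N : ℕ} {k : Ker N} {Ω : Set (EE N)} (ho : IsOpen Ω) {u g : EE N → ℝ} {M : ℝ}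
    (hu : BM u M) (hg : ContDiffOn ℝ 1 g Ω) (h : MV k Ω u g) : ContDiffOn ℝ 2 u Ω := by
  intro x₀ hx
  obtain ⟨T, hT, hTb, hev⟩ := h.near ho hx
  obtain ⟨g', hg', hc', heq⟩ := loc (n := 1) one_le_two (isCompact_closedBall x₀ (2 * T)) ho hTb hg
  have : ContDiff ℝ 2 (fun x => Cv k.ρ T u x + VV k T g' x) :=
    ((Cv_contDiff k.admρ hu hT.ne').of_le (by norm_num)).add (V_contDiff_two k hg' hc' hT.le)
  refine (this.contDiffAt.congr_of_eventuallyEq (hev.mono fun x hx => ?_)).contDiffWithinAt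
  rw [hx.2, V_congr k hT.le fun y hy => (heq.self_of_nhdsSet y (hx.1 hy)).symm]

theorem V_inj_le {N : ℕ} (k : Ker N) {f g : EE N → ℝ} {M M' : ℝ} (hf : BM f M) (hg : BM g M')
    {x : EE N} (hfc : ContinuousAt f x) (hgc : ContinuousAt g x)
    (h : ∀ᶠ T in 𝓝[>] (0 : ℝ), VV k T f x = VV k T g x) : g x ≤ f x := by
  by_contra hlt
  push Not at hlt
  set δ := (g x - f x) / 2 with hδ
  have h1 : ∀ᶠ y in 𝓝 x, f y + δ < g y := by
    have h0 : f x + δ < g x := by linarith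
    exact (hfc.add (continuousAt_const (y := δ))).eventually_lt hgc h0
  obtain ⟨r, hr, hb⟩ := Metric.nhds_basis_closedBall.mem_iff.1 h1
  obtain ⟨T, ⟨hT, hTr⟩, hT0⟩ := ((h.and (Ioo_mem_nhdsGT hr)).and self_mem_nhdsWithin).exists
  have h2 := V_mono k (hf.add (BM.const δ)) hg hTr.1.le (x := x)
    fun y hy => (hb (closedBall_subset_closedBall hTr.2.le hy)).le
  have h3 := V_sub k (hf.add (BM.const δ)) hf T x
  simp only [add_sub_cancel_left] at h3
  rw [V_const] at h3
  have h4 : 0 < k.c * T ^ 2 * δ := by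
    have := k.c_pos; have := hTr.1; have : 0 < δ := by simp only [hδ]; linarith
    positivity
  linarith

theorem V_inj {N : ℕ} (k : Ker N) {f g : EE N → ℝ} {M M' : ℝ} (hf : BM f M) (hg : BM g M')
    {x : EE N} (hfc : ContinuousAt f x) (hgc : ContinuousAt g x)
    (h : ∀ᶠ T in 𝓝[>] (0 : ℝ), VV k T f x = VV k T g x) : f x = g x :=
  le_antisymm (V_inj_le k hg hf hgc hfc (h.mono fun _ h => h.symm)) (V_inj_le k hf hg hfc hgc h)

theorem MV.lapl_eq {N : ℕ} {k : Ker N} {Ω : Set (EE N)} (ho : IsOpen Ω) {u g : EE N → ℝ} {M' : ℝ}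
    (hu : ContDiffOn ℝ 2 u Ω) (hg : BM g M') (hgc : ContinuousOn g Ω) (h : MV k Ω u g)
    {x : EE N} (hx : x ∈ Ω) : - lapl u x = g x := by
  obtain ⟨r, hr, hb⟩ := Metric.nhds_basis_closedBall.mem_iff.1 (ho.mem_nhds hx)
  obtain ⟨w, hw, hc, hev⟩ := loc (n := 2) le_rfl (isCompact_closedBall x r) ho hb hu
  have hxr : x ∈ closedBall x r := mem_closedBall_self hr.le
  rw [← lapl_congr (eventually_nhdsSet_iff_forall.1 hev x hxr)]
  obtain ⟨M, -, hM⟩ := BM.of_hcs (lapl_cont hw) (lapl_hcs hc)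
  have hM' := hM.cmul (-1)
  simp only [neg_one_mul] at hM'
  refine V_inj k hM' hg (lapl_cont hw).neg.continuousAt (hgc.continuousAt (ho.mem_nhds hx)) ?_
  filter_upwards [Ioo_mem_nhdsGT hr] with T hT
  have hsub : closedBall x T ⊆ closedBall x r := closedBall_subset_closedBall hT.2.le
  have h1 := VP k hw hc T x
  have h2 := h x T hT.1 (hsub.trans hb)
  have e : ∀ y ∈ closedBall x T, w y = u y := fun y hy => hev.self_of_nhdsSet y (hsub hy)
  rw [e x (mem_closedBall_self hT.1.le), Cv_congr k.admρ hT.1.le e] at h1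
  linarith


theorem Cv_le_add {N : ℕ} (k : Ker N) {f g : EE N → ℝ} {M M' : ℝ} (hf : BM f M) (hg : BM g M')
    {t η : ℝ} (ht : 0 ≤ t) {x : EE N} (h : ∀ y ∈ closedBall x t, f y ≤ g y + η) :
    Cv k.ρ t f x ≤ Cv k.ρ t g x + η := by
  have := Cv_mono k.admρ k.ρ_nn hf (hg.add (BM.const η)) ht h
  rwa [Cv_add k.admρ hg (BM.const η), Cv_const, k.ρ_int, one_mul] at this

theorem Cv_close {N : ℕ} (k : Ker N) {f g : EE N → ℝ} {M M' : ℝ} (hf : BM f M) (hg : BM g M')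
    {t η : ℝ} (ht : 0 ≤ t) {x : EE N} (h : ∀ y ∈ closedBall x t, |f y - g y| ≤ η) :
    |Cv k.ρ t f x - Cv k.ρ t g x| ≤ η := by
  have h1 := Cv_le_add k hf hg ht (η := η) fun y hy => by have := (abs_le.1 (h y hy)).2; linarith
  have h2 := Cv_le_add k hg hf ht (η := η) fun y hy => by have := (abs_le.1 (h y hy)).1; linarith
  rw [abs_le]; constructor <;> linarith

theorem V_le_add {N : ℕ} (k : Ker N) {f g : EE N → ℝ} {M M' : ℝ} (hf : BM f M) (hg : BM g M')
    {T η : ℝ} (hT : 0 ≤ T) {x : EE N} (h : ∀ y ∈ closedBall x T, f y ≤ g y + η) :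
    VV k T f x ≤ VV k T g x + k.c * T ^ 2 * η := by
  have h1 := V_mono k hf (hg.add (BM.const η)) hT h
  have h2 := V_sub k (hg.add (BM.const η)) hg T x
  simp only [add_sub_cancel_left] at h2
  rw [V_const] at h2
  linarith

theorem V_close {N : ℕ} (k : Ker N) {f g : EE N → ℝ} {M M' : ℝ} (hf : BM f M) (hg : BM g M')
    {T η : ℝ} (hT : 0 ≤ T) {x : EE N} (h : ∀ y ∈ closedBall x T, |f y - g y| ≤ η) :
    |VV k T f x - VV k T g x| ≤ k.c * T ^ 2 * η := by
  have h1 := V_le_add k hf hg hT (η := η) fun y hy => by have := (abs_le.1 (h y hy)).2; linarith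
  have h2 := V_le_add k hg hf hT (η := η) fun y hy => by have := (abs_le.1 (h y hy)).1; linarith
  rw [abs_le]; constructor <;> linarith

theorem Cv_tendsto {N n : ℕ} {κ : EE N → ℝ} (hκ : Adm n κ) {v : ℕ → EE N → ℝ} {u : EE N → ℝ} {M : ℝ}
    (hv : ∀ n, BM (v n) M) (hl : ∀ y, Tendsto (fun n => v n y) atTop (𝓝 (u y))) (t : ℝ) (x : EE N) :
    Tendsto (fun n => Cv κ t (v n) x) atTop (𝓝 (Cv κ t u x)) := by
  refine tendsto_integral_of_dominated_convergence (fun z => |κ z| * M)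
    (fun n => (Cv_int hκ (hv n) t x).1) (hκ.int.abs.mul_const M) (fun n => Eventually.of_forall fun z => ?_)
    (Eventually.of_forall fun z => (hl _).const_mul _)
  rw [norm_mul]
  exact mul_le_mul_of_nonneg_left ((hv n).2 _) (norm_nonneg _)

theorem V_tendsto {N : ℕ} (k : Ker N) {v : ℕ → EE N → ℝ} {u : EE N → ℝ} {M : ℝ}
    (hv : ∀ n, BM (v n) M) (hl : ∀ y, Tendsto (fun n => v n y) atTop (𝓝 (u y))) (T : ℝ) (x : EE N) :
    Tendsto (fun n => VV k T (v n) x) atTop (𝓝 (VV k T u x)) := by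
  refine intervalIntegral.tendsto_integral_filter_of_dominated_convergence
    (fun t => |t| * ((∫ z, |k.σ z|) * M)) (Eventually.of_forall fun n => ?_)
    (Eventually.of_forall fun n => Eventually.of_forall fun t _ => ?_) ?_
    (Eventually.of_forall fun t _ => (Cv_tendsto k.admσ hv hl t x).const_mul t)
  · have hm : StronglyMeasurable (fun t : ℝ => Cv k.σ t (v n) x) :=
      (Cv_meas k.admσ (hv n).1).comp_measurable (g := fun t : ℝ => (t, x)) (by fun_prop)
    exact (stronglyMeasurable_id.mul hm).aestronglyMeasurable
  · rw [norm_mul]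
    exact mul_le_mul_of_nonneg_left (Cv_abs_le k.admσ (hv n) t x) (norm_nonneg _)
  · exact (Continuous.intervalIntegrable (by fun_prop) _ _)

theorem BM.lim {N : ℕ} {v : ℕ → EE N → ℝ} {u : EE N → ℝ} {M : ℝ}
    (hv : ∀ n, BM (v n) M) (hl : ∀ y, Tendsto (fun n => v n y) atTop (𝓝 (u y))) : BM u M :=
  ⟨measurable_of_tendsto_metrizable (fun n => (hv n).1) (tendsto_pi_nhds.2 hl),
    fun y => le_of_tendsto ((hl y).abs) (Eventually.of_forall fun n => (hv n).2 y)⟩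

theorem C0.unif {N : ℕ} {Ω : Set (EE N)} {u : EE N → ℝ} (h : C0 Ω u) (hb : Bornology.IsBounded Ω)
    {η : ℝ} (hη : 0 < η) : ∃ δ, 0 < δ ∧ ∀ x y, dist x y < δ → |u x - u y| < η := by
  have := (h.hcs hb).uniformContinuous_of_continuous h.1
  obtain ⟨δ, hδ, h⟩ := Metric.uniformContinuous_iff.1 this η hη
  exact ⟨δ, hδ, fun x y hxy => h hxy⟩

/-- inner region -/
def Oh {N : ℕ} (Ω : Set (EE N)) (h : ℝ) : Set (EE N) := (cthickening h Ωᶜ)ᶜ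

theorem Oh_sub {N : ℕ} {Ω : Set (EE N)} {h : ℝ} {x : EE N} (hx : x ∈ Oh Ω h) : closedBall x h ⊆ Ω := by
  intro y hy
  by_contra hn
  exact hx (mem_cthickening_of_dist_le x y h Ωᶜ hn (by rw [dist_comm]; exact hy))

theorem Oh_mem {N : ℕ} {Ω : Set (EE N)} {h r : ℝ} {x : EE N} (hr : 0 < r) (hlt : h < r)
    (hx : closedBall x r ⊆ Ω) : x ∈ Oh Ω h := by
  intro hc
  obtain ⟨y, hy, hd⟩ := mem_thickening_iff.1 (cthickening_subset_thickening' hr hlt _ hc)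
  exact hy (hx (by rw [mem_closedBall, dist_comm]; exact hd.le))

theorem Oh_not {N : ℕ} {Ω : Set (EE N)} {h r : ℝ} {x : EE N} (hr : 0 < r) (hlt : h < r)
    (hx : x ∉ Oh Ω h) : ∃ y, y ∉ Ω ∧ dist x y < r := by
  have hc : x ∈ cthickening h Ωᶜ := by simpa [Oh] using hx
  obtain ⟨y, hy, hd⟩ := mem_thickening_iff.1 (cthickening_subset_thickening' hr hlt _ hc)
  exact ⟨y, hy, hd⟩

theorem Oh_meas {N : ℕ} (Ω : Set (EE N)) (h : ℝ) : MeasurableSet (Oh Ω h) :=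
  isClosed_cthickening.measurableSet.compl

/-- standing assumptions on the domain and torsion function -/
structure Dom {N : ℕ} (k : Ker N) (Ω : Set (EE N)) (ξ : EE N → ℝ) : Prop where
  ho : IsOpen Ω
  hb : Bornology.IsBounded Ω
  hξ : C0 Ω ξ
  hm : MV k Ω ξ fun _ => 1
  nn : ∀ x, 0 ≤ ξ x

theorem Dom.step {N : ℕ} {k : Ker N} {Ω : Set (EE N)} {ξ : EE N → ℝ} (D : Dom k Ω ξ) {h : ℝ} (hh : 0 < h)
    {x : EE N} (hx : x ∈ Oh Ω h) : ξ x = Cv k.ρ h ξ x + k.c * h ^ 2 := by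
  rw [D.hm x h hh (Oh_sub hx), V_const, mul_one]

theorem Dom.dcomp {N : ℕ} {k : Ker N} {Ω : Set (EE N)} {ξ : EE N → ℝ} (D : Dom k Ω ξ) {h : ℝ} (hh : 0 < h)
    {S : Set (EE N)} (hS : S ⊆ Oh Ω h) {g : EE N → ℝ} {M : ℝ} (hg : BM g M)
    (h1 : ∀ x ∈ S, Cv k.ρ h g x ≤ g x) (h2 : ∀ x, x ∉ S → 0 ≤ g x) (x : EE N) : 0 ≤ g x := by
  obtain ⟨X, hX0, hX⟩ := D.hξ.bm D.hb
  have hc := k.c_pos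
  have key : ∀ ε : ℝ, 0 < ε → ∀ x, 0 ≤ g x + ε * ξ x := by
    intro ε hε
    have hB := hg.add (hX.cmul ε)
    have ind : ∀ n : ℕ, ∀ x, min 0 (-(M + |ε| * X) + n * (ε * (k.c * h ^ 2))) ≤ g x + ε * ξ x := by
      intro n
      induction n with
      | zero =>
        intro x
        have := (abs_le.1 (hB.2 x)).1
        refine (min_le_right _ _).trans ?_
        simp only [Nat.cast_zero, zero_mul, add_zero]
        exact this
      | succ n ih =>
        intro x
        set a := -(M + |ε| * X) + n * (ε * (k.c * h ^ 2)) with ha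
        have ha' : -(M + |ε| * X) + (n + 1 : ℕ) * (ε * (k.c * h ^ 2)) = a + ε * (k.c * h ^ 2) := by
          push_cast; ring
        rw [ha']
        by_cases hx : x ∈ S
        · have e1 := Cv_mono k.admρ k.ρ_nn (BM.const (min 0 a)) hB hh.le (x := x) fun y _ => ih y
          rw [Cv_const, k.ρ_int, one_mul, Cv_add k.admρ hg (hX.cmul ε), Cv_cmul] at e1
          have e2 := D.step hh (hS hx)
          have e3 := h1 x hx
          have e4 : ε * ξ x = ε * Cv k.ρ h ξ x + ε * (k.c * h ^ 2) := by rw [e2]; ring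
          have e5 : min 0 (a + ε * (k.c * h ^ 2)) ≤ min 0 a + ε * (k.c * h ^ 2) := by
            rw [← min_add_add_right]
            exact min_le_min_right _ (by positivity)
          linarith
        · exact (min_le_left _ _).trans (add_nonneg (h2 x hx) (mul_nonneg hε.le (D.nn x)))
    intro x
    obtain ⟨n, hn⟩ := exists_nat_gt ((M + |ε| * X) / (ε * (k.c * h ^ 2)))
    rw [div_lt_iff₀ (by positivity)] at hn
    have := ind n x
    rwa [min_eq_left (by linarith)] at this
  by_contra hneg
  push Not at hneg
  have h3 := key (-g x / (2 * (X + 1))) (by apply div_pos <;> linarith) x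
  have h4 : -g x / (2 * (X + 1)) * ξ x ≤ -g x / (2 * (X + 1)) * (X + 1) := by
    refine mul_le_mul_of_nonneg_left ?_ (by apply div_nonneg <;> linarith)
    have := (abs_le.1 (hX.2 x)).2; linarith
  have h5 : -g x / (2 * (X + 1)) * (X + 1) = -g x / 2 := by field_simp
  linarith

/-- discrete solution -/
structure DS {N : ℕ} (k : Ker N) (Ω : Set (EE N)) (ξ f : EE N → ℝ) (M h : ℝ) (u : EE N → ℝ) : Prop where
  meas : Measurable u
  nn : ∀ x, 0 ≤ u x
  le : ∀ x, u x ≤ M * ξ x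
  out : ∀ x, x ∉ Oh Ω h → u x = 0
  eq : ∀ x ∈ Oh Ω h, u x = Cv k.ρ h u x + k.c * h ^ 2 * f x

theorem Dom.exists_DS {N : ℕ} {k : Ker N} {Ω : Set (EE N)} {ξ : EE N → ℝ} (D : Dom k Ω ξ) {h : ℝ} (hh : 0 < h)
    {f : EE N → ℝ} (hf : Continuous f) {M : ℝ} (hf0 : ∀ x, 0 ≤ f x) (hfM : ∀ x, f x ≤ M) :
    ∃ u, DS k Ω ξ f M h u := by
  obtain ⟨X, hX0, hX⟩ := D.hξ.bm D.hb
  have hM0 : 0 ≤ M := (hf0 0).trans (hfM 0)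
  have hc := k.c_pos
  let S : (EE N → ℝ) → EE N → ℝ := fun v => (Oh Ω h).indicator fun x => Cv k.ρ h v x + k.c * h ^ 2 * f x
  let v : ℕ → EE N → ℝ := fun n => S^[n] fun _ => 0
  have vs : ∀ n, v (n + 1) = S (v n) := fun n => Function.iterate_succ_apply' S n _
  have Sin : ∀ w x, x ∈ Oh Ω h → S w x = Cv k.ρ h w x + k.c * h ^ 2 * f x := fun w x hx => by
    simp [S, hx]
  have Sout : ∀ w x, x ∉ Oh Ω h → S w x = 0 := fun w x hx => by simp [S, hx]
  have bd : ∀ n, Measurable (v n) ∧ (∀ x, 0 ≤ v n x) ∧ ∀ x, v n x ≤ M * ξ x := by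
    intro n
    induction n with
    | zero => exact ⟨measurable_const, fun x => le_rfl, fun x => mul_nonneg hM0 (D.nn x)⟩
    | succ n ih =>
      obtain ⟨i1, i2, i3⟩ := ih
      have hB : BM (v n) (M * X) := ⟨i1, fun x => by
        rw [abs_of_nonneg (i2 x)]
        exact (i3 x).trans (mul_le_mul_of_nonneg_left (abs_le.1 (hX.2 x)).2 hM0)⟩
      rw [vs]
      refine ⟨?_, fun x => ?_, fun x => ?_⟩
      · refine Measurable.indicator ?_ (Oh_meas Ω h)
        have : Measurable (fun x => Cv k.ρ h (v n) x) :=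
          (Cv_contDiff k.admρ hB hh.ne').continuous.measurable
        exact this.add (measurable_const.mul hf.measurable)
      · by_cases hx : x ∈ Oh Ω h
        · rw [Sin _ _ hx]
          have e := Cv_mono k.admρ k.ρ_nn (BM.const 0) hB hh.le (x := x) fun y _ => i2 y
          rw [Cv_const, mul_zero] at e
          have := hf0 x
          positivity
        · rw [Sout _ _ hx]
      · by_cases hx : x ∈ Oh Ω h
        · rw [Sin _ _ hx, D.step hh hx]
          have e := Cv_mono k.admρ k.ρ_nn hB (hX.cmul M) hh.le (x := x) fun y _ => i3 y
          rw [Cv_cmul] at e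
          have : k.c * h ^ 2 * f x ≤ k.c * h ^ 2 * M := mul_le_mul_of_nonneg_left (hfM x) (by positivity)
          linarith
        · rw [Sout _ _ hx]; exact mul_nonneg hM0 (D.nn x)
  have hB : ∀ n, BM (v n) (M * X) := fun n => ⟨(bd n).1, fun x => by
    rw [abs_of_nonneg ((bd n).2.1 x)]
    exact ((bd n).2.2 x).trans (mul_le_mul_of_nonneg_left (abs_le.1 (hX.2 x)).2 hM0)⟩
  have mono : ∀ n x, v n x ≤ v (n + 1) x := by
    intro n
    induction n with
    | zero => intro x; exact (bd 1).2.1 x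
    | succ n ih =>
      intro x
      rw [vs n, vs (n + 1)]
      by_cases hx : x ∈ Oh Ω h
      · rw [Sin _ _ hx, Sin _ _ hx]
        have := Cv_mono k.admρ k.ρ_nn (hB n) (hB (n + 1)) hh.le (x := x) fun y _ => ih y
        linarith
      · rw [Sout _ _ hx, Sout _ _ hx]
  have lim : ∀ x, Tendsto (fun n => v n x) atTop (𝓝 (⨆ n, v n x)) := fun x =>
    tendsto_atTop_ciSup (monotone_nat_of_le_succ fun n => mono n x)
      ⟨M * ξ x, by rintro _ ⟨n, rfl⟩; exact (bd n).2.2 x⟩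
  refine ⟨fun x => ⨆ n, v n x, (BM.lim hB lim).1, fun x => ?_, fun x => ?_, fun x hx => ?_, fun x hx => ?_⟩
  · exact ge_of_tendsto' (lim x) fun n => (bd n).2.1 x
  · exact le_of_tendsto' (lim x) fun n => (bd n).2.2 x
  · refine tendsto_nhds_unique ((tendsto_add_atTop_iff_nat 1).2 (lim x)) ?_
    simp only [vs, Sout _ _ hx]
    exact tendsto_const_nhds
  · refine tendsto_nhds_unique ((tendsto_add_atTop_iff_nat 1).2 (lim x)) ?_
    simp only [vs, Sin _ _ hx]
    exact (Cv_tendsto k.admρ hB lim h x).add_const _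

theorem DS.bm {N : ℕ} {k : Ker N} {Ω : Set (EE N)} {ξ f : EE N → ℝ} {M h X : ℝ} {u : EE N → ℝ}
    (H : DS k Ω ξ f M h u) (hX : BM ξ X) (hM : 0 ≤ M) : BM u (M * X) := ⟨H.meas, fun x => by
    rw [abs_of_nonneg (H.nn x)]
    exact (H.le x).trans (mul_le_mul_of_nonneg_left (abs_le.1 (hX.2 x)).2 hM)⟩

theorem Dom.equi {N : ℕ} {k : Ker N} {Ω : Set (EE N)} {ξ : EE N → ℝ} (D : Dom k Ω ξ)
    {f : EE N → ℝ} (hf : C0 Ω f) {M : ℝ} (hM : 0 ≤ M) {η : ℝ} (hη : 0 < η) :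
    ∃ δ, 0 < δ ∧ ∀ h u, 0 < h → h < δ → DS k Ω ξ f M h u → ∀ x y, dist x y < δ → |u x - u y| ≤ η := by
  obtain ⟨X, hX0, hX⟩ := D.hξ.bm D.hb
  set e := η / (X + 2) with he
  have he0 : 0 < e := by positivity
  obtain ⟨δ₁, hδ₁, h₁⟩ := hf.unif D.hb he0
  have hMξ : C0 Ω (fun x => M * ξ x) := ⟨continuous_const.mul D.hξ.1, fun x hx => by simp [D.hξ.2 x hx]⟩
  obtain ⟨δ₂, hδ₂, h₂⟩ := hMξ.unif D.hb he0
  refine ⟨min δ₁ δ₂, by positivity, fun h u hh hlt H => ?_⟩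
  have hu := H.bm hX hM
  have hc := k.c_pos
  have key : ∀ z : EE N, ‖z‖ < min δ₁ δ₂ → ∀ x, u (x + z) - u x ≤ η := by
    intro z hz x
    have hBz : BM (fun x => u (x + z)) (M * X) := ⟨hu.1.comp (by fun_prop), fun x => hu.2 _⟩
    have hg := ((hX.cmul e).add (BM.const (2 * e))).sub (hBz.sub hu)
    have := D.dcomp hh (S := Oh Ω h ∩ {x | x + z ∈ Oh Ω h}) inter_subset_left hg ?_ ?_ x
    · have h3 : e * ξ x ≤ e * X := mul_le_mul_of_nonneg_left (abs_le.1 (hX.2 x)).2 he0.le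
      have h4 : e * X + 2 * e = η := by rw [he]; field_simp
      linarith
    · rintro y ⟨hy1, hy2⟩
      have hy2 : y + z ∈ Oh Ω h := hy2
      rw [Cv_sub k.admρ ((hX.cmul e).add (BM.const (2 * e))) (hBz.sub hu),
        Cv_add k.admρ (hX.cmul e) (BM.const (2 * e)), Cv_sub k.admρ hBz hu, Cv_const, k.ρ_int, Cv_cmul]
      have e1 := H.eq y hy1
      have e2 := H.eq (y + z) hy2
      have e3 : Cv k.ρ h (fun x => u (x + z)) y = Cv k.ρ h u (y + z) := by
        simp only [Cv]; congr 1; ext w; rw [add_right_comm]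
      have e4 := D.step hh hy1
      have e5 : f (y + z) - f y ≤ e := (abs_lt.1 (h₁ (y + z) y (by
        simpa using hz.trans_le (min_le_left _ _)))).2.le
      have e6 : k.c * h ^ 2 * (f (y + z) - f y) ≤ k.c * h ^ 2 * e :=
        mul_le_mul_of_nonneg_left e5 (by positivity)
      rw [e3, e2, e1]
      have e7 : e * ξ y = e * Cv k.ρ h ξ y + e * (k.c * h ^ 2) := by rw [e4]; ring
      linarith
    · intro y hy
      by_cases hy1 : y ∈ Oh Ω h
      · have hy2 : y + z ∉ Oh Ω h := fun h' => hy ⟨hy1, h'⟩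
        rw [H.out _ hy2]
        have := H.nn y
        have := mul_nonneg he0.le (D.nn y)
        linarith
      · rw [H.out _ hy1]
        obtain ⟨y', hy', hd⟩ := Oh_not hδ₂ (hlt.trans_le (min_le_right _ _)) hy1
        have e1 := (abs_lt.1 (h₂ y y' hd)).2
        have e2 := (abs_lt.1 (h₂ (y + z) y (by simpa using hz.trans_le (min_le_right _ _)))).2
        rw [D.hξ.2 y' hy'] at e1
        have := H.le (y + z)
        have := mul_nonneg he0.le (D.nn y)
        linarith
  intro x y hxy
  rw [abs_le]
  have k1 := key (x - y) (by rwa [← dist_eq_norm]) y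
  have k2 := key (y - x) (by rwa [← dist_eq_norm, dist_comm]) x
  rw [add_sub_cancel] at k1 k2
  constructor <;> linarith

theorem Dom.approx {N : ℕ} {k : Ker N} {Ω : Set (EE N)} {ξ : EE N → ℝ} (D : Dom k Ω ξ)
    {f : EE N → ℝ} (hf : C0 Ω f) {M : ℝ} (hf0 : ∀ x, 0 ≤ f x) (hfM : ∀ x, f x ≤ M) :
    ∃ u, C0 Ω u ∧ (∀ x, 0 ≤ u x) ∧ (∀ x, u x ≤ M * ξ x) ∧
      ∀ η, 0 < η → ∃ h v, 0 < h ∧ h < η ∧ DS k Ω ξ f M h v ∧ ∀ x, |v x - u x| ≤ η := by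
  have hM : 0 ≤ M := (hf0 0).trans (hfM 0)
  have hpos : ∀ n : ℕ, (0 : ℝ) < 1 / ((n : ℝ) + 1) := fun n => Nat.one_div_pos_of_nat
  choose v hv using fun n : ℕ => D.exists_DS (hpos n) hf.1 hf0 hfM
  let F : Filter ℕ := (hyperfilter ℕ : Filter ℕ)
  have hF : F ≤ atTop := by
    rw [← Nat.cofinite_eq_atTop]; exact hyperfilter_le_cofinite
  have hex : ∀ x, ∃ a, Tendsto (fun n => v n x) F (𝓝 a) := by
    intro x
    obtain ⟨a, -, ha⟩ := (isCompact_Icc (a := 0) (b := M * ξ x)).ultrafilter_le_nhds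
      ((hyperfilter ℕ).map fun n => v n x) (by
        rw [Ultrafilter.coe_map, le_principal_iff, mem_map]
        exact univ_mem' fun n => ⟨(hv n).nn x, (hv n).le x⟩)
    exact ⟨a, ha⟩
  choose u hu using hex
  have hu0 : ∀ x, 0 ≤ u x := fun x => ge_of_tendsto' (hu x) fun n => (hv n).nn x
  have huM : ∀ x, u x ≤ M * ξ x := fun x => le_of_tendsto' (hu x) fun n => (hv n).le x
  have hsm : ∀ δ, 0 < δ → ∀ᶠ n : ℕ in F, 1 / ((n : ℝ) + 1) < δ := fun δ hδ =>
    hF (tendsto_one_div_add_atTop_nhds_zero_nat.eventually_lt_const hδ)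
  have hequi : ∀ η, 0 < η → ∃ δ, 0 < δ ∧ (∀ᶠ n in F, ∀ x y, dist x y < δ → |v n x - v n y| ≤ η) ∧
      ∀ x y, dist x y < δ → |u x - u y| ≤ η := by
    intro η hη
    obtain ⟨δ, hδ, h⟩ := D.equi hf hM hη
    have h1 : ∀ᶠ n in F, ∀ x y, dist x y < δ → |v n x - v n y| ≤ η :=
      (hsm δ hδ).mono fun n hn => h _ _ (hpos n) hn (hv n)
    refine ⟨δ, hδ, h1, fun x y hxy => ?_⟩
    exact le_of_tendsto ((hu x).sub (hu y)).abs (h1.mono fun n hn => hn x y hxy)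
  have huc : Continuous u := by
    rw [Metric.continuous_iff]
    intro x ε hε
    obtain ⟨δ, hδ, -, h⟩ := hequi (ε / 2) (by positivity)
    exact ⟨δ, hδ, fun y hy => (h y x hy).trans_lt (by linarith)⟩
  have hu00 : ∀ x, x ∉ Ω → u x = 0 := fun x hx => by
    have := huM x; rw [D.hξ.2 x hx, mul_zero] at this
    exact le_antisymm this (hu0 x)
  refine ⟨u, ⟨huc, hu00⟩, hu0, huM, fun η hη => ?_⟩
  obtain ⟨δ, hδ, h1, h2⟩ := hequi (η / 3) (by positivity)
  obtain ⟨t, -, htf, htc⟩ := D.hb.isCompact_closure.elim_finite_subcover_image (b := univ)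
    (c := fun y : EE N => ball y δ) (fun y _ => isOpen_ball)
    (fun x _ => mem_iUnion₂.2 ⟨x, mem_univ _, mem_ball_self hδ⟩)
  have h3 : ∀ᶠ n in F, ∀ y ∈ t, |v n y - u y| < η / 3 := by
    rw [eventually_all_finite htf]
    intro y _
    have := (hu y)
    rw [Metric.tendsto_nhds] at this
    exact this (η / 3) (by positivity)
  obtain ⟨n, hn1, hn2, hn3⟩ := (h1.and (h3.and (hsm η hη))).exists
  refine ⟨_, v n, hpos n, hn3, hv n, fun x => ?_⟩
  by_cases hx : x ∈ Ω
  · obtain ⟨y, hy, hxy⟩ := mem_iUnion₂.1 (htc (subset_closure hx))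
    have a1 := hn1 x y hxy
    have a2 := hn2 y hy
    have a3 := h2 y x (by rw [dist_comm]; exact hxy)
    have : v n x - u x = (v n x - v n y) + (v n y - u y) + (u y - u x) := by ring
    rw [this]
    refine (abs_add_three _ _ _).trans ?_
    linarith
  · have := (hv n).le x
    rw [D.hξ.2 x hx, mul_zero] at this
    rw [hu00 x hx, le_antisymm this ((hv n).nn x)]
    simpa using hη.le


theorem Cv_comm {N n m : ℕ} {κ κ' : EE N → ℝ} (hκ : Adm n κ) (hκ' : Adm m κ') {u : EE N → ℝ} {M : ℝ}
    (hu : BM u M) (s t : ℝ) (x : EE N) : Cv κ s (Cv κ' t u) x = Cv κ' t (Cv κ s u) x := by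
  simp only [Cv, ← integral_const_mul]
  rw [integral_integral_swap]
  · congr 1; ext z; congr 1; ext w
    rw [add_right_comm]; ring
  · have h1 : Integrable (fun p : EE N × EE N => κ p.1 * κ' p.2) (volume.prod volume) :=
      hκ.int.mul_prod hκ'.int
    have h2 := h1.mul_bdd (c := M) (g := fun p : EE N × EE N => u (x + s • p.1 + t • p.2))
      (hu.1.comp (by fun_prop)).aestronglyMeasurable (Eventually.of_forall fun p => hu.2 _)
    refine h2.congr (Eventually.of_forall fun p => ?_)
    simp [Function.uncurry, mul_assoc]

theorem Cv_hcs {N n : ℕ} {κ : EE N → ℝ} (hκ : Adm n κ) {Ω : Set (EE N)} (hb : Bornology.IsBounded Ω)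
    {u : EE N → ℝ} (hu : ∀ x, x ∉ Ω → u x = 0) {t : ℝ} (ht : 0 ≤ t) : HasCompactSupport (Cv κ t u) := by
  refine HasCompactSupport.intro (K := cthickening t Ω)
    (Metric.isCompact_of_isClosed_isBounded isClosed_cthickening hb.cthickening) fun x hx => ?_
  have : Cv κ t u x = Cv κ t (fun _ => 0) x := Cv_congr hκ ht fun y hy => hu y fun hy' =>
    hx (mem_cthickening_of_dist_le x y t Ω hy' (by rw [dist_comm]; exact hy))
  rw [this, Cv_const, mul_zero]

theorem lapl_Cv {N : ℕ} (k : Ker N) {u : EE N → ℝ} {M : ℝ} (hu : BM u M) {δ : ℝ} (hδ : δ ≠ 0) (x : EE N) :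
    lapl (Cv k.ρ δ u) x = ∑ i, (δ⁻¹) ^ 2 * Cv (fun z => fderiv ℝ (fun z => fderiv ℝ k.ρ z
      (EuclideanSpace.single i 1)) z (EuclideanSpace.single i 1)) δ u x := by
  refine Finset.sum_congr rfl fun i _ => ?_
  have h1 : (fun y => fderiv ℝ (Cv k.ρ δ u) y (EuclideanSpace.single i 1)) = fun y => -δ⁻¹ *
      Cv (fun z => fderiv ℝ k.ρ z (EuclideanSpace.single i 1)) δ u y := by
    ext y; exact Cv_fderiv (n := 3) k.admρ hu hδ y _
  have h2 : Adm 3 (fun z => fderiv ℝ k.ρ z (EuclideanSpace.single i 1)) := Adm.fderiv (n := 3) k.admρ _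
  rw [h1, fderiv_const_mul ((Cv_contDiff h2 hu hδ).differentiable (by simp) x), smul_apply,
    Cv_fderiv (n := 2) h2 hu hδ, smul_eq_mul]
  ring

theorem lapl_close {N : ℕ} (k : Ker N) {δ : ℝ} (hδ : δ ≠ 0) : ∃ C, 0 ≤ C ∧
    ∀ (u v : EE N → ℝ) (M M' η : ℝ), BM u M → BM v M' → (∀ y, |u y - v y| ≤ η) →
      ∀ x, |lapl (Cv k.ρ δ u) x - lapl (Cv k.ρ δ v) x| ≤ C * η := by
  let κ : Fin N → EE N → ℝ := fun i z => fderiv ℝ (fun z => fderiv ℝ k.ρ z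
      (EuclideanSpace.single i 1)) z (EuclideanSpace.single i 1)
  have hκ : ∀ i, Adm 2 (κ i) := fun i =>
    Adm.fderiv (n := 2) (Adm.fderiv (n := 3) k.admρ (EuclideanSpace.single i 1)) (EuclideanSpace.single i 1)
  refine ⟨∑ i, (δ⁻¹) ^ 2 * ∫ z, |κ i z|, Finset.sum_nonneg fun i _ => mul_nonneg (by positivity)
    (integral_nonneg fun z => abs_nonneg _), ?_⟩
  intro u v M M' η hu hv huv x
  rw [lapl_Cv k hu hδ, lapl_Cv k hv hδ, ← Finset.sum_sub_distrib, Finset.sum_mul]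
  refine (Finset.abs_sum_le_sum_abs _ _).trans (Finset.sum_le_sum fun i _ => ?_)
  rw [← mul_sub, abs_mul, abs_of_nonneg (by positivity : (0 : ℝ) ≤ (δ⁻¹) ^ 2), mul_assoc]
  refine mul_le_mul_of_nonneg_left ?_ (by positivity)
  have hB : BM (fun y => u y - v y) η := ⟨hu.1.sub hv.1, huv⟩
  have := Cv_abs_le (hκ i) hB δ x
  rwa [Cv_sub (hκ i) hu hv] at this

theorem Dom.stepA {N : ℕ} {k : Ker N} {Ω : Set (EE N)} {ξ : EE N → ℝ} (D : Dom k Ω ξ)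
    {f : EE N → ℝ} (hf : C0 Ω f) {M : ℝ} (hM : 0 ≤ M) {u : EE N → ℝ} (hu : C0 Ω u)
    (happ : ∀ η, 0 < η → ∃ h v, 0 < h ∧ h < η ∧ DS k Ω ξ f M h v ∧ ∀ x, |v x - u x| ≤ η)
    {δ : ℝ} (hδ : 0 < δ) {x : EE N} (hx : closedBall x (2 * δ) ⊆ Ω) :
    - lapl (Cv k.ρ δ u) x = Cv k.ρ δ f x := by
  obtain ⟨X, hX0, hX⟩ := D.hξ.bm D.hb
  obtain ⟨Mf, -, hMf⟩ := hf.bm D.hb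
  obtain ⟨Mu, -, hMu⟩ := hu.bm D.hb
  obtain ⟨C, hC0, hC⟩ := lapl_close k hδ.ne'
  set w := Cv k.ρ δ u
  have hw2 : ContDiff ℝ 2 w := (Cv_contDiff k.admρ hMu hδ.ne').of_le (by norm_num)
  have hc := k.c_pos
  have key : ∀ e, 0 < e → |(- lapl w x) - Cv k.ρ δ f x| ≤ e := by
    intro e he
    have hcont : ∀ᶠ y in 𝓝 x, |lapl w y - lapl w x| < e / 2 := by
      have := Metric.continuousAt_iff'.1 ((lapl_cont hw2).continuousAt (x := x)) (e / 2) (half_pos he)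
      simpa [Real.dist_eq] using this
    obtain ⟨r, hr, hrb⟩ := Metric.nhds_basis_closedBall.mem_iff.1 hcont
    set η := min r (min δ (e / (2 * (C + 1)))) with hη
    have hη0 : 0 < η := by positivity
    obtain ⟨h, v, hh, hhη, H, hv⟩ := happ η hη0
    have hhr : h ≤ r := hhη.le.trans (min_le_left _ _)
    have hhδ : h < δ := hhη.trans_le ((min_le_right _ _).trans (min_le_left _ _))
    have hηe : C * η ≤ e / 2 := by
      have h1 : η ≤ e / (2 * (C + 1)) := (min_le_right _ _).trans (min_le_right _ _)
      calc C * η ≤ (C + 1) * (e / (2 * (C + 1))) := by gcongr; linarith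
        _ = e / 2 := by field_simp
    have hMv := H.bm hX hM
    have hv0 : ∀ y, y ∉ Ω → v y = 0 := fun y hy => H.out y fun h' =>
      hy (Oh_sub h' (mem_closedBall_self hh.le))
    set W := Cv k.ρ δ v
    have hW2 : ContDiff ℝ 2 W := (Cv_contDiff k.admρ hMv hδ.ne').of_le (by norm_num)
    have hWc : HasCompactSupport W := Cv_hcs k.admρ D.hb hv0 hδ.le
    have e1 := VP k hW2 hWc h x
    have hAv : BM (Cv k.ρ h v) ((∫ z, |k.ρ z|) * (M * X)) :=
      ⟨(Cv_contDiff k.admρ hMv hh.ne').continuous.measurable, Cv_abs_le k.admρ hMv h⟩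
    have e2 : W x = Cv k.ρ h W x + k.c * h ^ 2 * Cv k.ρ δ f x := by
      have a1 : W x = Cv k.ρ δ (fun y => Cv k.ρ h v y + k.c * h ^ 2 * f y) x :=
        Cv_congr k.admρ hδ.le fun y hy => H.eq y (Oh_mem hδ hhδ (by
          refine (closedBall_subset_closedBall' ?_).trans hx
          have := mem_closedBall.1 hy; linarith))
      rw [a1, Cv_add k.admρ hAv (hMf.cmul _), Cv_cmul, Cv_comm k.admρ k.admρ hMv]
    have e3 : VV k h (fun y => -lapl W y) x = k.c * h ^ 2 * Cv k.ρ δ f x := by linarith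
    obtain ⟨ML, -, hML⟩ := BM.of_hcs (lapl_cont hW2) (lapl_hcs hWc)
    have hML' := hML.cmul (-1)
    simp only [neg_one_mul] at hML'
    have e4 := V_close k hML' (BM.const (-lapl w x)) hh.le (x := x) (η := e) (by
      intro y hy
      have b1 := hC v u _ _ η hMv hMu hv y
      have b2 : |lapl w y - lapl w x| < e / 2 := hrb (closedBall_subset_closedBall hhr hy)
      have b3 : -lapl W y - -lapl w x = -((lapl W y - lapl w y) + (lapl w y - lapl w x)) := by ring
      rw [b3, abs_neg]
      refine (abs_add_le _ _).trans ?_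
      linarith)
    rw [V_const, e3, ← mul_sub, abs_mul, abs_of_pos (by positivity)] at e4
    rw [abs_sub_comm]
    exact le_of_mul_le_mul_left e4 (by positivity)
  by_contra hne
  have : 0 < |(- lapl w x) - Cv k.ρ δ f x| := abs_pos.2 (sub_ne_zero.2 hne)
  linarith [key _ (half_pos this)]

theorem Dom.lin {N : ℕ} {k : Ker N} {Ω : Set (EE N)} {ξ : EE N → ℝ} (D : Dom k Ω ξ)
    {f : EE N → ℝ} (hf : C0 Ω f) {M : ℝ} (hf0 : ∀ x, 0 ≤ f x) (hfM : ∀ x, f x ≤ M) :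
    ∃ u, C0 Ω u ∧ (∀ x, 0 ≤ u x) ∧ (∀ x, u x ≤ M * ξ x) ∧ MV k Ω u f := by
  obtain ⟨u, hu, hu0, huM, happ⟩ := D.approx hf hf0 hfM
  have hM : 0 ≤ M := (hf0 0).trans (hfM 0)
  refine ⟨u, hu, hu0, huM, fun x T hT hb => ?_⟩
  obtain ⟨Mf, -, hMf⟩ := hf.bm D.hb
  obtain ⟨Mu, -, hMu⟩ := hu.bm D.hb
  have hc := k.c_pos
  obtain ⟨r, hr, hrb⟩ := (isCompact_closedBall x T).exists_cthickening_subset_open D.ho hb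
  have key : ∀ e, 0 < e → |u x - (Cv k.ρ T u x + VV k T f x)| ≤ (2 + k.c * T ^ 2) * e := by
    intro e he
    obtain ⟨δ₁, hδ₁, h₁⟩ := hu.unif D.hb he
    obtain ⟨δ₂, hδ₂, h₂⟩ := hf.unif D.hb he
    set δ := min (r / 2) (min (δ₁ / 2) (δ₂ / 2)) with hδ
    have hδ0 : 0 < δ := by positivity
    have hδr : 2 * δ ≤ r := by have : δ ≤ r / 2 := min_le_left _ _; linarith
    have hδ1 : δ < δ₁ := by
      have : δ ≤ δ₁ / 2 := (min_le_right _ _).trans (min_le_left _ _); linarith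
    have hδ2 : δ < δ₂ := by
      have : δ ≤ δ₂ / 2 := (min_le_right _ _).trans (min_le_right _ _); linarith
    have moll : ∀ (g : EE N → ℝ) (Mg : ℝ), BM g Mg → ∀ δ', δ < δ' → (∀ x y, dist x y < δ' → |g x - g y| < e) →
        ∀ y, |Cv k.ρ δ g y - g y| ≤ e := by
      intro g Mg hg δ' hδ' hh y
      have := Cv_close k hg (BM.const (g y)) hδ0.le (x := y) (η := e) fun z hz =>
        (hh z y ((mem_closedBall.1 hz).trans_lt hδ')).le
      rwa [Cv_const, k.ρ_int, one_mul] at this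
    have hw : ContDiff ℝ 2 (Cv k.ρ δ u) := (Cv_contDiff k.admρ hMu hδ0.ne').of_le (by norm_num)
    have hwc : HasCompactSupport (Cv k.ρ δ u) := Cv_hcs k.admρ D.hb hu.2 hδ0.le
    obtain ⟨Mw, -, hMw⟩ := BM.of_hcs hw.continuous hwc
    have hfδ : BM (Cv k.ρ δ f) ((∫ z, |k.ρ z|) * Mf) :=
      ⟨(Cv_contDiff k.admρ hMf hδ0.ne').continuous.measurable, Cv_abs_le k.admρ hMf δ⟩
    have e1 := VP k hw hwc T x
    have e2 : VV k T (fun y => -lapl (Cv k.ρ δ u) y) x = VV k T (Cv k.ρ δ f) x :=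
      V_congr k hT.le fun y hy => D.stepA hf hM hu happ hδ0 (by
        refine Subset.trans ?_ hrb
        refine Subset.trans ?_ (closedBall_subset_cthickening hy r)
        exact closedBall_subset_closedBall hδr)
    rw [e2] at e1
    have a1 := moll u Mu hMu δ₁ hδ1 h₁
    have a2 := moll f Mf hMf δ₂ hδ2 h₂
    have b1 := Cv_close k hMw hMu hT.le (x := x) (η := e) fun y _ => a1 y
    have b2 := V_close k hfδ hMf hT.le (x := x) (η := e) fun y _ => a2 y
    have b3 := a1 x
    rw [abs_le] at *
    constructor <;> linarith
  by_contra hne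
  have hpos : 0 < |u x - (Cv k.ρ T u x + VV k T f x)| := abs_pos.2 (sub_ne_zero.2 hne)
  have := key (|u x - (Cv k.ρ T u x + VV k T f x)| / (2 * (2 + k.c * T ^ 2))) (by positivity)
  have e : (2 + k.c * T ^ 2) * (|u x - (Cv k.ρ T u x + VV k T f x)| / (2 * (2 + k.c * T ^ 2)))
    = |u x - (Cv k.ρ T u x + VV k T f x)| / 2 := by field_simp
  linarith


/-- abstract sublinear-type nonlinearity -/
structure NL (F : ℝ → ℝ) (a p : ℝ) : Prop where
  a_pos : 0 < a
  p_pos : 0 < p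
  p_lt : p < 1
  cont : Continuous F
  mono : Monotone F
  zero : F 0 = 0
  c1 : ∀ s, 0 < s → s ≤ a → ContDiffAt ℝ 1 F s
  scal : ∀ s r, 0 < s → s ≤ r → r ≤ a → F r ≤ (r / s) ^ p * F s
  sing : ∀ l t, 0 < l → 0 < t → ∃ ε, 0 < ε ∧ ε ≤ a ∧ ∀ s, 0 ≤ s → s ≤ ε → l * s ≤ t * F s

/-- the truncated nonlinearity -/
def FF (μ q s : ℝ) : ℝ := μ * (max s 0) ^ q + π * Real.sin (min (max s 0) (π / 2)) ^ 3

theorem FF_eq {μ q s : ℝ} (h0 : 0 ≤ s) (h1 : s ≤ π / 2) : FF μ q s = μ * s ^ q + π * Real.sin s ^ 3 := by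
  rw [FF, max_eq_left h0, min_eq_left h1]

theorem sin_scale {s r : ℝ} (hs : 0 < s) (hsr : s ≤ r) (hr : r ≤ π / 2) : Real.sin r ≤ r / s * Real.sin s := by
  have hr0 : 0 < r := hs.trans_le hsr
  have hpi := Real.pi_pos
  have := strictConcaveOn_sin_Icc.concaveOn.2 (show (0 : ℝ) ∈ Icc 0 π from ⟨le_rfl, hpi.le⟩)
    (show r ∈ Icc 0 π from ⟨hr0.le, by linarith⟩)
    (show 0 ≤ 1 - s / r by rw [sub_nonneg, div_le_one hr0]; exact hsr) (show 0 ≤ s / r by positivity) (by ring)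
  simp only [smul_eq_mul, Real.sin_zero, mul_zero, zero_add] at this
  rw [div_mul_cancel₀ _ hr0.ne', div_mul_eq_mul_div, div_le_iff₀ hr0] at this
  rw [div_mul_eq_mul_div, le_div_iff₀ hs]
  linarith

theorem NL_exists {q X : ℝ} (hq0 : 0 < q) (hq1 : q < 1) (hX : 0 < X) :
    ∃ μ₀ : ℝ, 0 < μ₀ ∧ ∀ μ : ℝ, 0 < μ → μ < μ₀ → ∃ a p, NL (FF μ q) a p ∧ a < π / 2 ∧ FF μ q a ≤ a / X := by
  have hpi := Real.pi_pos
  have hpi3 := Real.pi_gt_three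
  set p := (1 + q) / 2 with hp
  set κ := (p - q) / (3 * π) with hκ
  have hpq : 0 < p - q := by rw [hp]; linarith
  have hκ0 : 0 < κ := by positivity
  set a₀ := min 1 (√(κ / (2 * X))) with ha₀
  have ha₀0 : 0 < a₀ := by positivity
  refine ⟨a₀ ^ (3 - q) / κ, by positivity, fun μ hμ hμlt => ?_⟩
  set a := (κ * μ) ^ (1 / (3 - q)) with ha
  have ha0 : 0 < a := by positivity
  have h3q : 0 < 3 - q := by linarith
  have hapow : a ^ (3 - q) = κ * μ := by
    rw [ha, ← Real.rpow_mul (by positivity), one_div_mul_cancel h3q.ne', Real.rpow_one]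
  have haa₀ : a < a₀ := by
    rw [lt_div_iff₀ hκ0, mul_comm, ← hapow] at hμlt
    exact (Real.rpow_lt_rpow_iff ha0.le ha₀0.le h3q).1 hμlt
  have ha1 : a < 1 := haa₀.trans_le (min_le_left _ _)
  have haπ : a < π / 2 := by linarith
  have hasq : 2 * X * a ^ 2 ≤ κ := by
    have h1 : a ≤ √(κ / (2 * X)) := haa₀.le.trans (min_le_right _ _)
    have h2 : a ^ 2 ≤ κ / (2 * X) := by
      rw [← Real.sq_sqrt (by positivity : 0 ≤ κ / (2 * X))]
      gcongr
    rwa [le_div_iff₀ (by positivity), mul_comm] at h2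
  have hsplit : ∀ s : ℝ, 0 < s → s ^ 3 = s ^ q * s ^ (3 - q) := by
    intro s hs
    rw [← Real.rpow_add hs]
    norm_num
  refine ⟨a, p, ⟨ha0, by rw [hp]; linarith, by rw [hp]; linarith, ?_, ?_, ?_, ?_, ?_, ?_⟩, haπ, ?_⟩
  · unfold FF
    refine Continuous.add (continuous_const.mul ?_) (by fun_prop)
    exact (continuous_id.max continuous_const).rpow_const fun x => Or.inr hq0.le
  · intro s r hsr
    unfold FF
    have h1 : max s 0 ≤ max r 0 := max_le_max_right _ hsr
    have h2 : min (max s 0) (π / 2) ≤ min (max r 0) (π / 2) := min_le_min_right _ h1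
    have h3 : 0 ≤ min (max s 0) (π / 2) := le_min (le_max_right _ _) (by positivity)
    have h4 : 0 ≤ Real.sin (min (max s 0) (π / 2)) :=
      Real.sin_nonneg_of_nonneg_of_le_pi h3 ((min_le_right _ _).trans (by linarith))
    have h5 : Real.sin (min (max s 0) (π / 2)) ≤ Real.sin (min (max r 0) (π / 2)) :=
      Real.sin_le_sin_of_le_of_le_pi_div_two (by linarith) (min_le_right _ _) h2
    gcongr
  · rw [FF_eq le_rfl (by positivity), Real.zero_rpow hq0.ne', Real.sin_zero]; ring
  · intro s hs hsa
    have h1 : ContDiffAt ℝ 1 (fun s : ℝ => μ * s ^ q + π * Real.sin s ^ 3) s := by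
      refine ContDiffAt.add (contDiffAt_const.mul ?_) ?_
      · exact Real.contDiffAt_rpow_const_of_ne hs.ne'
      · exact contDiffAt_const.mul ((Real.contDiff_sin.contDiffAt).pow 3)
    refine h1.congr_of_eventuallyEq ?_
    filter_upwards [Ioo_mem_nhds hs (hsa.trans_lt haπ)] with y hy
    exact FF_eq hy.1.le hy.2.le
  · intro s r hs hsr hra
    have hr0 : 0 < r := hs.trans_le hsr
    rw [FF_eq hr0.le (hra.trans haπ.le), FF_eq hs.le ((hsr.trans hra).trans haπ.le)]
    obtain ⟨m, hm⟩ : ∃ m, m = r / s := ⟨_, rfl⟩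
    have hm1 : 1 ≤ m := by rw [hm, le_div_iff₀ hs]; linarith
    have hm0 : 0 < m := by linarith
    have hrm : r = m * s := by rw [hm]; field_simp
    rw [← hm, hrm, Real.mul_rpow hm0.le hs.le]
    have hsin := sin_scale hs hsr (hra.trans haπ.le)
    rw [← hm, hrm] at hsin
    have hsn0 : 0 ≤ Real.sin s := Real.sin_nonneg_of_nonneg_of_le_pi hs.le (by linarith)
    have hsn0' : 0 ≤ Real.sin (m * s) := Real.sin_nonneg_of_nonneg_of_le_pi (by positivity) (by rw [← hrm]; linarith)
    have hsns : Real.sin s ≤ s := Real.sin_le hs.le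
    have h1 : Real.sin (m * s) ^ 3 ≤ m ^ 3 * Real.sin s ^ 3 := by
      rw [← mul_pow]; gcongr
    have hlog : 0 ≤ Real.log m := Real.log_nonneg hm1
    have hmp : m ^ p ≤ m ^ 3 := by
      rw [← Real.rpow_natCast m 3]
      exact Real.rpow_le_rpow_of_exponent_le hm1 (by push_cast; rw [hp]; linarith)
    -- main inequality
    have h2 : π * κ * (1 - m ^ (p - 3)) ≤ m ^ (p - q) - 1 := by
      have b1 : 1 - m ^ (p - 3) ≤ 3 * Real.log m := by
        have := Real.add_one_le_exp (Real.log m * (p - 3))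
        rw [← Real.rpow_def_of_pos hm0] at this
        have : Real.log m * (3 - p) ≤ Real.log m * 3 := by
          apply mul_le_mul_of_nonneg_left _ hlog; rw [hp]; linarith
        linarith
      have b2 : (p - q) * Real.log m ≤ m ^ (p - q) - 1 := by
        have := Real.add_one_le_exp (Real.log m * (p - q))
        rw [← Real.rpow_def_of_pos hm0] at this
        linarith
      have b3 : π * κ = (p - q) / 3 := by rw [hκ]; field_simp
      rw [b3]
      have b4 : (p - q) / 3 * (1 - m ^ (p - 3)) ≤ (p - q) / 3 * (3 * Real.log m) := by gcongr
      linarith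
    have h3 : s ^ (3 - q) * m ^ (3 - q) ≤ κ * μ := by
      rw [← hapow, ← Real.mul_rpow hs.le hm0.le, mul_comm, ← hrm]
      gcongr
    have e3 : m ^ 3 = m ^ q * m ^ (3 - q) := hsplit m hm0
    have e4 : m ^ p = m ^ q * m ^ (p - q) := by rw [← Real.rpow_add hm0]; congr 1; ring
    have e5 : m ^ p = m ^ 3 * m ^ (p - 3) := by
      rw [← Real.rpow_natCast m 3, ← Real.rpow_add hm0]; congr 1; push_cast; ring
    have e6 : m ^ (p - 3) ≤ 1 := by
      apply Real.rpow_le_one_of_one_le_of_nonpos hm1; rw [hp]; linarith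
    have h4 : π * (m ^ 3 - m ^ p) * s ^ 3 ≤ μ * s ^ q * (m ^ p - m ^ q) := by
      calc π * (m ^ 3 - m ^ p) * s ^ 3
          = π * m ^ q * s ^ q * (1 - m ^ (p - 3)) * (s ^ (3 - q) * m ^ (3 - q)) := by
            rw [hsplit s hs, e5, e3]; ring
        _ ≤ π * m ^ q * s ^ q * (1 - m ^ (p - 3)) * (κ * μ) := by
            have : 0 ≤ 1 - m ^ (p - 3) := by linarith
            gcongr
        _ = μ * s ^ q * m ^ q * (π * κ * (1 - m ^ (p - 3))) := by ring
        _ ≤ μ * s ^ q * m ^ q * (m ^ (p - q) - 1) := by gcongr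
        _ = _ := by rw [e4]; ring
    have h5 : π * (m ^ 3 - m ^ p) * Real.sin s ^ 3 ≤ π * (m ^ 3 - m ^ p) * s ^ 3 := by
      have : 0 ≤ m ^ 3 - m ^ p := by linarith
      gcongr
    have h6 : π * Real.sin (m * s) ^ 3 ≤ π * (m ^ 3 * Real.sin s ^ 3) := by gcongr
    linarith
  · intro l t hl ht
    have h1q : 0 < 1 - q := by linarith
    set ε := min a ((t * μ / l) ^ (1 / (1 - q))) with hε
    have hε0 : 0 < ε := by positivity
    refine ⟨ε, hε0, min_le_left _ _, fun s hs hsε => ?_⟩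
    have hsa : s ≤ a := hsε.trans (min_le_left _ _)
    rcases hs.eq_or_lt with rfl | hs0
    · rw [FF_eq le_rfl (by positivity), Real.zero_rpow hq0.ne', Real.sin_zero]; simp
    rw [FF_eq hs (hsa.trans haπ.le)]
    have h1 : s ^ (1 - q) ≤ t * μ / l := by
      calc s ^ (1 - q) ≤ ((t * μ / l) ^ (1 / (1 - q))) ^ (1 - q) := by
            apply Real.rpow_le_rpow hs (hsε.trans (min_le_right _ _)) h1q.le
        _ = t * μ / l := by
            rw [← Real.rpow_mul (by positivity), one_div_mul_cancel h1q.ne', Real.rpow_one]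
    have h2 : s = s ^ (1 - q) * s ^ q := by rw [← Real.rpow_add hs0]; simp
    have h3 : l * s ≤ t * (μ * s ^ q) := by
      calc l * s = l * s ^ (1 - q) * s ^ q := by rw [mul_assoc, ← h2]
        _ ≤ l * (t * μ / l) * s ^ q := by gcongr
        _ = t * (μ * s ^ q) := by field_simp
    have hsn0 : 0 ≤ Real.sin s := Real.sin_nonneg_of_nonneg_of_le_pi hs (by linarith)
    have h4 : 0 ≤ t * (π * Real.sin s ^ 3) := by positivity
    linarith
  · rw [FF_eq ha0.le haπ.le]
    have hsn0 : 0 ≤ Real.sin a := Real.sin_nonneg_of_nonneg_of_le_pi ha0.le (by linarith)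
    have h1 : Real.sin a ^ 3 ≤ a ^ 3 := by gcongr; exact Real.sin_le ha0.le
    have h2 : π * a ^ 3 = a ^ q * (μ * (π * κ)) := by rw [hsplit a ha0, hapow]; ring
    have h3 : π * κ ≤ 1 := by
      have : π * κ = (p - q) / 3 := by rw [hκ]; field_simp
      rw [this, hp]; linarith
    have h4 : a ^ q * (μ * (π * κ)) ≤ a ^ q * (μ * 1) := by gcongr
    have h5 : π * Real.sin a ^ 3 ≤ π * a ^ 3 := by gcongr
    have h6 : 2 * μ * a ^ q ≤ a / X := by
      rw [le_div_iff₀ hX]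
      have : 2 * X * a ^ 2 * (μ * a ^ q) ≤ κ * (μ * a ^ q) := by gcongr
      have h7 : κ * (μ * a ^ q) = a ^ 3 := by rw [hsplit a ha0, hapow]; ring
      rw [h7] at this
      have h8 : a ^ 2 * (2 * μ * a ^ q * X) ≤ a ^ 2 * a := by nlinarith
      exact le_of_mul_le_mul_left h8 (by positivity)
    linarith


theorem C0.compF {N : ℕ} {Ω : Set (EE N)} {u : EE N → ℝ} {F : ℝ → ℝ} (hF : Continuous F) (h0 : F 0 = 0)
    (h : C0 Ω u) (t : ℝ) : C0 Ω (fun x => t * F (u x)) :=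
  ⟨continuous_const.mul (hF.comp h.1), fun x hx => by beta_reduce; rw [h.2 x hx, h0, mul_zero]⟩

theorem C0.cmul {N : ℕ} {Ω : Set (EE N)} {u : EE N → ℝ} (h : C0 Ω u) (t : ℝ) : C0 Ω (fun x => t * u x) :=
  ⟨continuous_const.mul h.1, fun x hx => by beta_reduce; rw [h.2 x hx, mul_zero]⟩

theorem MV.cmul {N : ℕ} {k : Ker N} {Ω : Set (EE N)} {u f : EE N → ℝ} (h : MV k Ω u f) (t : ℝ) :
    MV k Ω (fun x => t * u x) (fun x => t * f x) := by
  intro x T hT hb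
  rw [Cv_cmul, V_cmul]
  beta_reduce
  rw [h x T hT hb]; ring

/-- minimal solutions -/
structure Sol {N : ℕ} (k : Ker N) (Ω : Set (EE N)) (F : ℝ → ℝ) (a t : ℝ) (b u : EE N → ℝ) : Prop where
  c0 : C0 Ω u
  lo : ∀ x, b x ≤ u x
  hi : ∀ x, u x ≤ a
  mv : MV k Ω u (fun x => t * F (u x))
  min : ∀ w g M, C0 Ω w → BM g M → MV k Ω w g → (∀ x, b x ≤ w x) →
    (∀ x ∈ Ω, ∀ v, 0 ≤ v → v ≤ a → v ≤ w x → t * F v ≤ g x) → ∀ x, u x ≤ w x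

theorem NL.nn {F : ℝ → ℝ} {a p : ℝ} (H : NL F a p) {s : ℝ} (hs : 0 ≤ s) : 0 ≤ F s := by
  rw [← H.zero]; exact H.mono hs

theorem Dom.sol {N : ℕ} {k : Ker N} {Ω : Set (EE N)} {ξ : EE N → ℝ} (D : Dom k Ω ξ) {F : ℝ → ℝ} {a p : ℝ}
    (H : NL F a p) {X : ℝ} (hX0 : 0 < X) (hX : ∀ x, ξ x ≤ X) (hFa : F a ≤ a / X)
    {b : EE N → ℝ} {fb : EE N → ℝ} {Mb : ℝ} (hb : C0 Ω b) (hb0 : ∀ x, 0 ≤ b x) (hba : ∀ x, b x ≤ a)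
    (hfb : BM fb Mb) (hbm : MV k Ω b fb) {t : ℝ} (ht0 : 0 ≤ t) (ht1 : t ≤ 1) (hbF : ∀ x, fb x ≤ t * F (b x)) :
    ∃ u, Sol k Ω F a t b u := by
  have hS : ∀ g, ∃ u, C0 Ω g → (∀ x, 0 ≤ g x) → C0 Ω u ∧ (∀ x, 0 ≤ u x) ∧ MV k Ω u g := by
    intro g
    by_cases hg : C0 Ω g ∧ ∀ x, 0 ≤ g x
    · obtain ⟨M, -, hM⟩ := hg.1.bm D.hb
      obtain ⟨u, h1, h2, -, h4⟩ := D.lin hg.1 hg.2 (fun x => (abs_le.1 (hM.2 x)).2)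
      exact ⟨u, fun _ _ => ⟨h1, h2, h4⟩⟩
    · exact ⟨0, fun h1 h2 => absurd ⟨h1, h2⟩ hg⟩
  choose S hS using hS
  let v : ℕ → EE N → ℝ := fun n => (fun w => S fun x => t * F (w x))^[n] b
  have vs : ∀ n, v (n + 1) = S fun x => t * F (v n x) := fun n => Function.iterate_succ_apply' _ n _
  have hK0 : 0 ≤ F a := H.nn H.a_pos.le
  have hKξ : C0 Ω (fun x => F a * ξ x) := D.hξ.cmul _
  have hKm : MV k Ω (fun x => F a * ξ x) (fun x => F a * 1) := D.hm.cmul _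
  have hKa : ∀ x, F a * ξ x ≤ a := fun x => by
    calc F a * ξ x ≤ F a * X := mul_le_mul_of_nonneg_left (hX x) hK0
      _ ≤ a / X * X := by gcongr
      _ = a := by field_simp
  have tF : ∀ s, s ≤ a → 0 ≤ s → t * F s ≤ F a * 1 := fun s h1 h2 => by
    have e1 := H.mono h1
    have e2 := H.nn h2
    calc t * F s ≤ 1 * F s := by gcongr
      _ ≤ _ := by linarith
  have bd : ∀ n, C0 Ω (v n) ∧ (∀ x, 0 ≤ v n x) ∧ (∀ x, v n x ≤ F a * ξ x) := by
    intro n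
    induction n with
    | zero =>
      refine ⟨hb, hb0, compar D.ho D.hb D.hξ D.hm hb hKξ hfb (BM.const _) hbm hKm fun x _ => ?_⟩
      exact (hbF x).trans (tF _ (hba x) (hb0 x))
    | succ n ih =>
      obtain ⟨i1, i2, i3⟩ := ih
      have c := i1.compF H.cont H.zero t
      obtain ⟨j1, j2, j3⟩ := hS _ c fun x => mul_nonneg ht0 (H.nn (i2 x))
      rw [vs]
      obtain ⟨M, -, hM⟩ := c.bm D.hb
      exact ⟨j1, j2, compar D.ho D.hb D.hξ D.hm j1 hKξ hM (BM.const _) j3 hKm fun x _ =>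
        tF _ ((i3 x).trans (hKa x)) (i2 x)⟩
  have va : ∀ n x, v n x ≤ a := fun n x => ((bd n).2.2 x).trans (hKa x)
  have vm : ∀ n, MV k Ω (v (n + 1)) (fun x => t * F (v n x)) := fun n => by
    rw [vs]
    exact (hS _ ((bd n).1.compF H.cont H.zero t) fun x => mul_nonneg ht0 (H.nn ((bd n).2.1 x))).2.2
  have vFB : ∀ n, ∃ M, BM (fun x => t * F (v n x)) M := fun n => by
    obtain ⟨M, -, hM⟩ := ((bd n).1.compF H.cont H.zero t).bm D.hb
    exact ⟨M, hM⟩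
  have mono : ∀ n x, v n x ≤ v (n + 1) x := by
    intro n
    induction n with
    | zero =>
      obtain ⟨M', hM'⟩ := vFB 0
      exact compar D.ho D.hb D.hξ D.hm hb (bd 1).1 hfb hM' hbm (vm 0) fun x _ => hbF x
    | succ n ih =>
      obtain ⟨M, hM⟩ := vFB n
      obtain ⟨M', hM'⟩ := vFB (n + 1)
      exact compar D.ho D.hb D.hξ D.hm (bd _).1 (bd _).1 hM hM' (vm n) (vm _) fun x _ =>
        mul_le_mul_of_nonneg_left (H.mono (ih x)) ht0
  have lim : ∀ x, Tendsto (fun n => v n x) atTop (𝓝 (⨆ n, v n x)) := fun x =>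
    tendsto_atTop_ciSup (monotone_nat_of_le_succ fun n => mono n x)
      ⟨a, by rintro _ ⟨n, rfl⟩; exact va n x⟩
  set u : EE N → ℝ := fun x => ⨆ n, v n x with hu
  have hB : ∀ n, BM (v n) a := fun n => ⟨(bd n).1.1.measurable, fun x => by
    rw [abs_of_nonneg ((bd n).2.1 x)]; exact va n x⟩
  have hFB : ∀ n, BM (fun x => t * F (v n x)) (F a * 1) := fun n =>
    ⟨((bd n).1.compF H.cont H.zero t).1.measurable, fun x => by
      rw [abs_of_nonneg (mul_nonneg ht0 (H.nn ((bd n).2.1 x)))]; exact tF _ (va n x) ((bd n).2.1 x)⟩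
  have limF : ∀ x, Tendsto (fun n => t * F (v n x)) atTop (𝓝 (t * F (u x))) := fun x =>
    ((H.cont.tendsto _).comp (lim x)).const_mul t
  have uB := BM.lim hB lim
  have uFB := BM.lim hFB limF
  have umv : MV k Ω u (fun x => t * F (u x)) := by
    intro x T hT hbb
    refine tendsto_nhds_unique ((tendsto_add_atTop_iff_nat 1).2 (lim x)) ?_
    refine Tendsto.congr (fun n => (vm n x T hT hbb).symm) ?_
    exact (Cv_tendsto k.admρ (fun n => hB (n + 1)) (fun y => (tendsto_add_atTop_iff_nat 1).2 (lim y)) T x).add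
      (V_tendsto k hFB limF T x)
  have u0 : ∀ x, 0 ≤ u x := fun x => ge_of_tendsto' (lim x) fun n => (bd n).2.1 x
  have uK : ∀ x, u x ≤ F a * ξ x := fun x => le_of_tendsto' (lim x) fun n => (bd n).2.2 x
  have uout : ∀ x, x ∉ Ω → u x = 0 := fun x hx => by
    refine le_antisymm ?_ (u0 x)
    have := uK x
    rwa [D.hξ.2 x hx, mul_zero] at this
  have ucont : Continuous u := by
    rw [continuous_iff_continuousAt]
    intro x
    by_cases hx : x ∈ Ω
    · exact (MV.reg1 D.ho uB uFB umv).continuousOn.continuousAt (D.ho.mem_nhds hx)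
    · rw [ContinuousAt, uout x hx]
      refine tendsto_of_tendsto_of_tendsto_of_le_of_le tendsto_const_nhds ?_ u0 uK
      have := hKξ.1.tendsto x
      have e : F a * ξ x = 0 := hKξ.2 x hx
      rwa [e] at this
  refine ⟨u, ⟨ucont, uout⟩, fun x => ge_of_tendsto (lim x) ?_, fun x => (uK x).trans (hKa x), umv, ?_⟩
  · exact Eventually.of_forall fun n => monotone_nat_of_le_succ (fun n => mono n x) (Nat.zero_le n)
  · intro w g M hw hg hwg hbw hcond x
    refine le_of_tendsto' (lim x) fun n => ?_
    have : ∀ n x, v n x ≤ w x := by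
      intro n
      induction n with
      | zero => exact hbw
      | succ n ih =>
        exact compar D.ho D.hb D.hξ D.hm (bd _).1 hw (hFB n) hg (vm n) hwg fun x hx =>
          hcond x hx _ ((bd n).2.1 x) (va n x) (ih x)
    exact this n x


theorem Sol.ratio {N : ℕ} {k : Ker N} {Ω : Set (EE N)} {ξ : EE N → ℝ} (D : Dom k Ω ξ) {F : ℝ → ℝ} {a p : ℝ}
    (H : NL F a p) {b : EE N → ℝ} (hb : ∀ x ∈ Ω, 0 < b x) (hb0 : ∀ x, 0 ≤ b x) {s t : ℝ} {us ut : EE N → ℝ}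
    (hs : 0 < s) (hst : s ≤ t) (Hs : Sol k Ω F a s b us) (Ht : Sol k Ω F a t b ut) :
    (∀ x, F (us x) * us x ≤ F (ut x) * ut x) ∧
    ∀ x, F (ut x) * ut x ≤ (t / s) ^ ((1 + p) / (1 - p)) * (F (us x) * us x) := by
  have hp : 0 < 1 - p := by linarith [H.p_lt]
  have hp0 := H.p_pos
  have ht : 0 < t := hs.trans_le hst
  have s0 : ∀ x, 0 ≤ us x := fun x => (hb0 x).trans (Hs.lo x)
  have t0 : ∀ x, 0 ≤ ut x := fun x => (hb0 x).trans (Ht.lo x)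
  have le1 : ∀ x, us x ≤ ut x := by
    obtain ⟨M, -, hM⟩ := (Ht.c0.compF H.cont H.zero t).bm D.hb
    refine Hs.min ut _ M Ht.c0 hM Ht.mv Ht.lo fun x hx v hv0 hva hvu => ?_
    have e1 := H.mono hvu
    have e2 := H.nn hv0
    calc s * F v ≤ t * F v := by gcongr
      _ ≤ t * F (ut x) := by gcongr
  obtain ⟨m, hm⟩ : ∃ m, m = (t / s) ^ (1 / (1 - p)) := ⟨_, rfl⟩
  have hts : 1 ≤ t / s := by rwa [le_div_iff₀ hs, one_mul]
  have hm1 : 1 ≤ m := by rw [hm]; exact Real.one_le_rpow hts (by positivity)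
  have hm0 : 0 < m := by linarith
  have hmp : m ^ (1 - p) = t / s := by
    rw [hm, ← Real.rpow_mul (by positivity), one_div_mul_cancel hp.ne', Real.rpow_one]
  have hmm : m ^ (1 - p) * m ^ p = m := by rw [← Real.rpow_add hm0]; simp
  have hmt : t * m ^ p = m * s := by
    rw [hmp] at hmm
    field_simp at hmm
    linarith
  have hmp1 : 1 ≤ m ^ p := Real.one_le_rpow hm1 hp0.le
  have Fle : ∀ x ∈ Ω, ∀ v, 0 ≤ v → v ≤ a → v ≤ m * us x → F v ≤ m ^ p * F (us x) := by
    intro x hx v hv0 hva hvu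
    have hpos : 0 < us x := (hb x hx).trans_le (Hs.lo x)
    have hF := H.nn (s0 x)
    rcases le_total v (us x) with h | h
    · exact (H.mono h).trans (by nlinarith)
    · refine (H.scal _ _ hpos h hva).trans (mul_le_mul_of_nonneg_right ?_ hF)
      refine Real.rpow_le_rpow (by positivity) ?_ hp0.le
      rwa [div_le_iff₀ hpos]
  have le2 : ∀ x, ut x ≤ m * us x := by
    obtain ⟨M, -, hM⟩ := ((Hs.c0.compF H.cont H.zero s).cmul m).bm D.hb
    refine Ht.min _ _ M (Hs.c0.cmul m) hM (Hs.mv.cmul m) (fun x => ?_) fun x hx v hv0 hva hvu => ?_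
    · have := s0 x
      have := Hs.lo x
      nlinarith
    · have := mul_le_mul_of_nonneg_left (Fle x hx v hv0 hva hvu) ht.le
      rw [← mul_assoc, hmt] at this
      linarith
  refine ⟨fun x => mul_le_mul (H.mono (le1 x)) (le1 x) (s0 x) (H.nn (t0 x)), fun x => ?_⟩
  by_cases hx : x ∈ Ω
  · have e1 := Fle x hx _ (t0 x) (Ht.hi x) (le2 x)
    have e3 : (t / s) ^ ((1 + p) / (1 - p)) = m ^ p * m := by
      rw [← Real.rpow_add_one hm0.ne', hm, ← Real.rpow_mul (by positivity)]
      congr 1; ring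
    rw [e3]
    calc F (ut x) * ut x ≤ (m ^ p * F (us x)) * (m * us x) :=
          mul_le_mul e1 (le2 x) (t0 x) (mul_nonneg (by positivity) (H.nn (s0 x)))
      _ = _ := by ring
  · rw [Hs.c0.2 x hx, Ht.c0.2 x hx]; simp

theorem Dom.exist {N : ℕ} {k : Ker N} {Ω : Set (EE N)} {ξ : EE N → ℝ} (D : Dom k Ω ξ) {F : ℝ → ℝ} {a p : ℝ}
    (H : NL F a p) {X : ℝ} (hX0 : 0 < X) (hX : ∀ x, ξ x ≤ X) (hFa : F a ≤ a / X)
    {φ : EE N → ℝ} {l d : ℝ} (hl : 0 < l) (hd : 0 < d) (hφ : C0 Ω φ) (hφ0 : ∀ x ∈ Ω, 0 < φ x) (hφ1 : ∀ x, φ x ≤ 1)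
    (hφm : MV k Ω φ fun x => l * φ x) :
    ∃ t u, 0 < t ∧ C0 Ω u ∧ (∀ x ∈ Ω, 0 < u x) ∧ (∀ x, u x ≤ a) ∧ MV k Ω u (fun x => t * F (u x)) ∧
      t * (1 + d * (t * ∫ x, F (u x) * u x)) = 1 := by
  have hφnn : ∀ x, 0 ≤ φ x := fun x => by
    by_cases hx : x ∈ Ω
    · exact (hφ0 x hx).le
    · rw [hφ.2 x hx]
  set C := F a * a * (volume Ω).toReal with hC
  have hC0 : 0 ≤ C := mul_nonneg (mul_nonneg (H.nn H.a_pos.le) H.a_pos.le) ENNReal.toReal_nonneg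
  set t₀ := 1 / (1 + d * C) with ht₀
  have ht₀0 : 0 < t₀ := by positivity
  have ht₀1 : t₀ ≤ 1 := by
    rw [ht₀, div_le_one (by positivity)]; nlinarith
  obtain ⟨ε, hε, hεa, hεF⟩ := H.sing l t₀ hl ht₀0
  have hεφ : C0 Ω (fun x => ε * φ x) := hφ.cmul ε
  have hbε : ∀ x, ε * φ x ≤ ε := fun x => by nlinarith [hφ1 x]
  obtain ⟨Mb, -, hMb⟩ := (hφ.cmul l).bm D.hb
  have ex : ∀ t, t ∈ Icc t₀ 1 → ∃ u, Sol k Ω F a t (fun x => ε * φ x) u := by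
    intro t ht
    refine D.sol H hX0 hX hFa hεφ (fun x => mul_nonneg hε.le (hφnn x)) (fun x => (hbε x).trans hεa)
      (hMb.cmul ε) (hφm.cmul ε) (ht₀0.le.trans ht.1) ht.2 fun x => ?_
    have e1 := hεF (ε * φ x) (mul_nonneg hε.le (hφnn x)) (hbε x)
    have e2 := H.nn (mul_nonneg hε.le (hφnn x))
    calc ε * (l * φ x) = l * (ε * φ x) := by ring
      _ ≤ t₀ * F (ε * φ x) := e1
      _ ≤ t * F (ε * φ x) := by gcongr; exact ht.1
  choose! u hu using ex
  have hpos : ∀ t ∈ Icc t₀ 1, ∀ x, 0 ≤ u t x := fun t ht x =>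
    (mul_nonneg hε.le (hφnn x)).trans ((hu t ht).lo x)
  let I : ℝ → ℝ := fun t => ∫ x, F (u t x) * u t x
  have hintg : ∀ t ∈ Icc t₀ 1, Integrable (fun x => F (u t x) * u t x) := fun t ht => by
    have c : C0 Ω (fun x => F (u t x) * u t x) :=
      ⟨(H.cont.comp (hu t ht).c0.1).mul (hu t ht).c0.1, fun x hx => by
        beta_reduce; rw [(hu t ht).c0.2 x hx, mul_zero]⟩
    exact c.1.integrable_of_hasCompactSupport (c.hcs D.hb)
  have hI0 : ∀ t ∈ Icc t₀ 1, 0 ≤ I t := fun t ht =>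
    integral_nonneg fun x => mul_nonneg (H.nn (hpos t ht x)) (hpos t ht x)
  have hIC : ∀ t ∈ Icc t₀ 1, I t ≤ C := fun t ht => by
    have e1 : I t = ∫ x in Ω, F (u t x) * u t x := by
      symm
      refine setIntegral_eq_integral_of_forall_compl_eq_zero fun x hx => ?_
      rw [(hu t ht).c0.2 x hx, mul_zero]
    rw [e1]
    have fin : volume Ω < ⊤ := D.hb.measure_lt_top
    have e2 : ∫ x in Ω, F (u t x) * u t x ≤ ∫ x in Ω, F a * a := by
      refine integral_mono (hintg t ht).integrableOn (integrableOn_const fin.ne) fun x => ?_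
      exact mul_le_mul (H.mono ((hu t ht).hi x)) ((hu t ht).hi x) (hpos t ht x) (H.nn H.a_pos.le)
    refine e2.trans (le_of_eq ?_)
    rw [setIntegral_const, smul_eq_mul, hC, mul_comm, Measure.real]
  set α := (1 + p) / (1 - p) with hα
  have hrat : ∀ s ∈ Icc t₀ 1, ∀ t ∈ Icc t₀ 1, s ≤ t → I s ≤ I t ∧ I t ≤ (t / s) ^ α * I s := by
    intro s hs t ht hst
    obtain ⟨r1, r2⟩ := Sol.ratio D H (fun x hx => mul_pos hε (hφ0 x hx)) (fun x => mul_nonneg hε.le (hφnn x))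
      (ht₀0.trans_le hs.1) hst (hu s hs) (hu t ht)
    refine ⟨integral_mono (hintg s hs) (hintg t ht) r1, ?_⟩
    rw [← integral_const_mul]
    exact integral_mono (hintg t ht) ((hintg s hs).const_mul _) r2
  have hcont : ContinuousOn I (Icc t₀ 1) := by
    intro r hr
    have hr0 : 0 < r := ht₀0.trans_le hr.1
    have hpw : ContinuousAt (fun t : ℝ => (t / r) ^ α) r := by
      refine ContinuousAt.rpow_const (by fun_prop) (Or.inl ?_)
      rw [div_self hr0.ne']; exact one_ne_zero
    have hlo : Tendsto (fun t : ℝ => min 1 ((t / r) ^ α) * I r) (𝓝[Icc t₀ 1] r) (𝓝 (I r)) := by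
      have : ContinuousAt (fun t : ℝ => min 1 ((t / r) ^ α) * I r) r := (continuousAt_const.min hpw).mul continuousAt_const
      have := this.tendsto
      rw [div_self hr0.ne', Real.one_rpow, min_self, one_mul] at this
      exact this.mono_left nhdsWithin_le_nhds
    have hhi : Tendsto (fun t : ℝ => max 1 ((t / r) ^ α) * I r) (𝓝[Icc t₀ 1] r) (𝓝 (I r)) := by
      have : ContinuousAt (fun t : ℝ => max 1 ((t / r) ^ α) * I r) r := (continuousAt_const.max hpw).mul continuousAt_const
      have := this.tendsto
      rw [div_self hr0.ne', Real.one_rpow, max_self, one_mul] at this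
      exact this.mono_left nhdsWithin_le_nhds
    refine tendsto_of_tendsto_of_tendsto_of_le_of_le' hlo hhi ?_ ?_
    · filter_upwards [self_mem_nhdsWithin] with t ht
      have hI := hI0 r hr
      have ht0 : 0 < t := ht₀0.trans_le ht.1
      rcases le_total r t with h | h
      · refine le_trans ?_ (hrat r hr t ht h).1
        have := min_le_left 1 ((t / r) ^ α)
        nlinarith
      · have e := (hrat t ht r hr h).2
        calc min 1 ((t / r) ^ α) * I r ≤ (t / r) ^ α * I r := by gcongr; exact min_le_right _ _
          _ ≤ (t / r) ^ α * ((r / t) ^ α * I t) := by gcongr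
          _ = I t := by
            rw [← mul_assoc, ← Real.mul_rpow (by positivity) (by positivity)]
            have : t / r * (r / t) = 1 := by field_simp
            rw [this, Real.one_rpow, one_mul]
    · filter_upwards [self_mem_nhdsWithin] with t ht
      have hI := hI0 r hr
      rcases le_total r t with h | h
      · refine (hrat r hr t ht h).2.trans ?_
        gcongr; exact le_max_right _ _
      · refine (hrat t ht r hr h).1.trans ?_
        have := le_max_left 1 ((t / r) ^ α)
        nlinarith
  have hG : ContinuousOn (fun t => t * (1 + d * (t * I t))) (Icc t₀ 1) := by fun_prop
  have m0 : t₀ ∈ Icc t₀ 1 := ⟨le_rfl, ht₀1⟩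
  have m1 : (1 : ℝ) ∈ Icc t₀ 1 := ⟨ht₀1, le_rfl⟩
  obtain ⟨t, ht, hte⟩ := intermediate_value_Icc ht₀1 hG (show (1 : ℝ) ∈ Icc _ _ from ⟨by
    have e1 := hIC t₀ m0
    have e2 : t₀ * I t₀ ≤ 1 * C := mul_le_mul ht₀1 e1 (hI0 _ m0) zero_le_one
    calc t₀ * (1 + d * (t₀ * I t₀)) ≤ t₀ * (1 + d * (1 * C)) := by gcongr
      _ = 1 := by rw [ht₀]; field_simp, by
    have := hI0 1 m1
    have : 0 ≤ d * I 1 := by positivity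
    simp only [one_mul]; linarith⟩)
  exact ⟨t, u t, ht₀0.trans_le ht.1, (hu t ht).c0, fun x hx => (mul_pos hε (hφ0 x hx)).trans_le ((hu t ht).lo x),
    (hu t ht).hi, (hu t ht).mv, hte⟩


theorem grad_sq {N : ℕ} (u : EE N → ℝ) (x : EE N) :
    ‖gradient u x‖ ^ 2 = ∑ i, fderiv ℝ u x (EuclideanSpace.single i 1) * fderiv ℝ u x (EuclideanSpace.single i 1) := by
  rw [EuclideanSpace.norm_sq_eq]
  refine Finset.sum_congr rfl fun i _ => ?_
  have : fderiv ℝ u x (EuclideanSpace.single i 1) = gradient u x i := by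
    rw [← inner_gradient_left]
    rw [EuclideanSpace.inner_single_right]; simp
  rw [this, Real.norm_eq_abs, sq_abs, sq]

theorem energy1 {N : ℕ} {Ω : Set (EE N)} (ho : IsOpen Ω) (hb : Bornology.IsBounded Ω) {u g : EE N → ℝ}
    (hu : C0 Ω u) (hu2 : ContDiffOn ℝ 2 u Ω) (hg : ∀ x ∈ Ω, -lapl u x = g x)
    {θ Φ : ℝ → ℝ} {δ : ℝ} (hδ : 0 < δ) (hθ : Continuous θ) (hΦ : ∀ s, HasDerivAt Φ (θ s) s)
    (hθ0 : ∀ s, s ≤ δ → θ s = 0) (hΦ0 : ∀ s, s ≤ δ → Φ s = 0) :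
    Continuous (fun x => θ (u x) * ‖gradient u x‖ ^ 2) ∧
    HasCompactSupport (fun x => θ (u x) * ‖gradient u x‖ ^ 2) ∧
    ∫ x, θ (u x) * ‖gradient u x‖ ^ 2 = ∫ x, g x * Φ (u x) := by
  set K : Set (EE N) := {x | δ ≤ u x} with hK
  have hKc : IsClosed K := isClosed_le continuous_const hu.1
  have hKΩ : K ⊆ Ω := fun x hx => by
    by_contra hn
    have hx : δ ≤ u x := hx
    rw [hu.2 x hn] at hx; linarith
  have hKcomp : IsCompact K := Metric.isCompact_of_isClosed_isBounded hKc (hb.subset hKΩ)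
  obtain ⟨w, hw, hwc, hev⟩ := loc (n := 2) le_rfl hKcomp ho hKΩ hu2
  have hw : ContDiff ℝ 2 w := hw
  have hnear : ∀ x ∈ K, w =ᶠ[𝓝 x] u := fun x hx => eventually_nhdsSet_iff_forall.1 hev x hx
  have hfd : ∀ x ∈ K, fderiv ℝ w x = fderiv ℝ u x := fun x hx => (hnear x hx).fderiv_eq
  have hout : ∀ x, x ∉ K → u x < δ := fun x hx => not_le.1 hx
  have hv : ∀ x, HasFDerivAt (fun x => Φ (u x)) (θ (u x) • fderiv ℝ w x) x := by
    intro x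
    by_cases hx : x ∈ K
    · have h1 : HasFDerivAt u (fderiv ℝ w x) x :=
        ((hw.differentiable two_ne_zero) x).hasFDerivAt.congr_of_eventuallyEq (hnear x hx).symm
      exact (hΦ (u x)).comp_hasFDerivAt x h1
    · rw [hθ0 _ (hout x hx).le, zero_smul]
      refine (hasFDerivAt_const (0 : ℝ) x).congr_of_eventuallyEq ?_
      filter_upwards [hKc.isOpen_compl.mem_nhds hx] with y hy
      exact hΦ0 _ (hout y hy).le
  have hΦc : Continuous Φ := continuous_iff_continuousAt.2 fun s => (hΦ s).continuousAt
  have hvc : Continuous (fun x => Φ (u x)) := hΦc.comp hu.1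
  have hθu : Continuous (fun x => θ (u x)) := hθ.comp hu.1
  have hsq : ∀ x, θ (u x) * ‖gradient u x‖ ^ 2 = ∑ i, fderiv ℝ w x (EuclideanSpace.single i 1) *
      fderiv ℝ (fun x => Φ (u x)) x (EuclideanSpace.single i 1) := by
    intro x
    simp only [(hv x).fderiv, smul_apply, smul_eq_mul]
    by_cases hx : x ∈ K
    · rw [grad_sq, hfd x hx, Finset.mul_sum]
      exact Finset.sum_congr rfl fun i _ => by ring
    · rw [hθ0 _ (hout x hx).le]; simp
  have hD : ∀ i, ContDiff ℝ 1 (fun y => fderiv ℝ w y (EuclideanSpace.single i 1)) := fun i =>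
    (hw.fderiv_right (m := 1) (by norm_num)).clm_apply contDiff_const
  have hDv : ∀ i, Continuous (fun x => fderiv ℝ (fun x => Φ (u x)) x (EuclideanSpace.single i 1)) := fun i => by
    simp only [(hv _).fderiv, smul_apply, smul_eq_mul]
    exact hθu.mul (hD i).continuous
  have hDc : ∀ i, HasCompactSupport (fun y => fderiv ℝ w y (EuclideanSpace.single i 1)) := fun i =>
    hwc.fderiv_apply (𝕜 := ℝ) _
  have hprod : ∀ i, Integrable (fun x => fderiv ℝ w x (EuclideanSpace.single i 1) *
      fderiv ℝ (fun x => Φ (u x)) x (EuclideanSpace.single i 1)) := fun i =>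
    ((hD i).continuous.mul (hDv i)).integrable_of_hasCompactSupport (hDc i).mul_right
  have hprod2 : ∀ i, Integrable (fun x => fderiv ℝ (fun y => fderiv ℝ w y (EuclideanSpace.single i 1)) x
      (EuclideanSpace.single i 1) * Φ (u x)) := fun i =>
    ((((hD i).continuous_fderiv one_ne_zero).clm_apply continuous_const).mul hvc).integrable_of_hasCompactSupport
      ((hDc i).fderiv_apply (𝕜 := ℝ) _).mul_right
  refine ⟨?_, ?_, ?_⟩
  · simp only [hsq]
    exact continuous_finsetSum _ fun i _ => (hD i).continuous.mul (hDv i)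
  · refine HasCompactSupport.intro hKcomp fun x hx => ?_
    rw [hθ0 _ (hout x hx).le, zero_mul]
  · simp only [hsq]
    rw [integral_finsetSum _ fun i _ => hprod i]
    have e1 : ∀ i, ∫ x, fderiv ℝ w x (EuclideanSpace.single i 1) *
        fderiv ℝ (fun x => Φ (u x)) x (EuclideanSpace.single i 1) =
        -∫ x, fderiv ℝ (fun y => fderiv ℝ w y (EuclideanSpace.single i 1)) x
          (EuclideanSpace.single i 1) * Φ (u x) := fun i =>
      integral_mul_fderiv_eq_neg_fderiv_mul_of_integrable (hprod2 i) (hprod i)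
        (((hD i).continuous.mul hvc).integrable_of_hasCompactSupport (hDc i).mul_right)
        (fun x _ => (hD i).differentiable one_ne_zero x) (fun x _ => (hv x).differentiableAt)
    simp only [e1]
    rw [Finset.sum_neg_distrib, ← integral_finsetSum _ fun i _ => hprod2 i, ← integral_neg]
    congr 1; ext x
    rw [← Finset.sum_mul, ← neg_mul]
    by_cases hx : x ∈ K
    · rw [← hg x (hKΩ hx), ← lapl_congr (hnear x hx)]; rfl
    · rw [hΦ0 _ (hout x hx).le]; simp

/-- truncations -/
def th (n : ℕ) (r : ℝ) : ℝ := max 0 (min 1 ((n + 1) * r - 1))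

theorem th_cont (n : ℕ) : Continuous (th n) := by unfold th; fun_prop
theorem th_nn (n : ℕ) (r : ℝ) : 0 ≤ th n r := le_max_left _ _
theorem th_le (n : ℕ) (r : ℝ) : th n r ≤ 1 := max_le zero_le_one (min_le_left _ _)
theorem th_zero (n : ℕ) {r : ℝ} (h : r ≤ 1 / ((n : ℝ) + 1)) : th n r = 0 := by
  rw [le_div_iff₀ (by positivity)] at h
  exact max_eq_left ((min_le_right _ _).trans (by linarith))
theorem th_mono {r : ℝ} (hr : 0 ≤ r) : Monotone fun n => th n r := by
  intro n m h
  have : (n : ℝ) ≤ m := by exact_mod_cast h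
  unfold th
  beta_reduce
  gcongr
theorem th_lim {r : ℝ} (hr : 0 < r) : Tendsto (fun n => th n r) atTop (𝓝 1) := by
  refine tendsto_const_nhds.congr' ?_
  obtain ⟨n, hn⟩ := exists_nat_gt (2 / r)
  filter_upwards [eventually_ge_atTop n] with m hm
  have : (n : ℝ) ≤ m := by exact_mod_cast hm
  rw [div_lt_iff₀ hr] at hn
  have h2 : (n : ℝ) * r ≤ m * r := by gcongr
  rw [th, min_eq_left (by linarith), max_eq_right zero_le_one]

/-- primitives of the truncations -/
def Th (n : ℕ) (s : ℝ) : ℝ := ∫ r in (0 : ℝ)..s, th n r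

theorem Th_deriv (n : ℕ) (s : ℝ) : HasDerivAt (Th n) (th n s) s :=
  ((th_cont n).integral_hasStrictDerivAt 0 s).hasDerivAt

theorem Th_zero (n : ℕ) {s : ℝ} (h : s ≤ 1 / ((n : ℝ) + 1)) : Th n s = 0 := by
  refine (intervalIntegral.integral_congr (g := fun _ => 0) fun r hr => th_zero n ?_).trans
    intervalIntegral.integral_zero
  have h0 : (0 : ℝ) ≤ 1 / ((n : ℝ) + 1) := by positivity
  exact hr.2.trans (max_le h0 h)

theorem Th_abs (n : ℕ) {s : ℝ} : |Th n s| ≤ |s| := by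
  have := intervalIntegral.norm_integral_le_of_norm_le_const (a := 0) (b := s) (f := th n) (C := 1) fun r _ => by
    rw [Real.norm_eq_abs, abs_of_nonneg (th_nn n r)]; exact th_le n r
  simpa [Th] using this

theorem Th_lim {s : ℝ} (hs : 0 ≤ s) : Tendsto (fun n => Th n s) atTop (𝓝 s) := by
  have : Tendsto (fun n => Th n s) atTop (𝓝 (∫ _ in (0 : ℝ)..s, (1 : ℝ))) := by
    refine intervalIntegral.tendsto_integral_filter_of_dominated_convergence (fun _ => 1)
      (Eventually.of_forall fun n => (th_cont n).aestronglyMeasurable)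
      (Eventually.of_forall fun n => Eventually.of_forall fun r _ => ?_) intervalIntegrable_const
      (Eventually.of_forall fun r hr => ?_)
    · rw [Real.norm_eq_abs, abs_of_nonneg (th_nn n r)]; exact th_le n r
    · rw [uIoc_of_le hs] at hr
      exact th_lim hr.1
  simpa using this

theorem energy {N : ℕ} {Ω : Set (EE N)} (ho : IsOpen Ω) (hb : Bornology.IsBounded Ω) {u g : EE N → ℝ}
    (hu : C0 Ω u) (hu0 : ∀ x ∈ Ω, 0 < u x) (hu2 : ContDiffOn ℝ 2 u Ω) (hg : ∀ x ∈ Ω, -lapl u x = g x)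
    (hgc : Continuous g) (hg0 : ∀ x, 0 ≤ g x) :
    gradNorm2 Ω u ^ 2 = ∫ x, g x * u x := by
  have unn : ∀ x, 0 ≤ u x := fun x => by
    by_cases hx : x ∈ Ω
    · exact (hu0 x hx).le
    · rw [hu.2 x hx]
  have E := fun n : ℕ => energy1 ho hb hu hu2 hg (δ := 1 / ((n : ℝ) + 1)) (by positivity) (th_cont n) (Th_deriv n)
    (fun s => th_zero n) (fun s => Th_zero n)
  have Thc : ∀ n, Continuous (Th n) := fun n => continuous_iff_continuousAt.2 fun s => (Th_deriv n s).continuousAt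
  have R : Tendsto (fun n => ∫ x, g x * Th n (u x)) atTop (𝓝 (∫ x, g x * u x)) := by
    refine tendsto_integral_of_dominated_convergence (fun x => |g x * u x|)
      (fun n => (hgc.mul ((Thc n).comp hu.1)).aestronglyMeasurable)
      (((hgc.mul hu.1).integrable_of_hasCompactSupport (hu.hcs hb).mul_left).abs)
      (fun n => Eventually.of_forall fun x => ?_)
      (Eventually.of_forall fun x => (Th_lim (unn x)).const_mul _)
    rw [Real.norm_eq_abs, abs_mul, abs_mul]
    exact mul_le_mul_of_nonneg_left (Th_abs n) (abs_nonneg _)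
  have L1 : ∀ n, ∫⁻ x in Ω, ENNReal.ofReal (th n (u x) * ‖gradient u x‖ ^ 2) =
      ENNReal.ofReal (∫ x, g x * Th n (u x)) := fun n => by
    rw [← (E n).2.2, ← setIntegral_eq_integral_of_forall_compl_eq_zero (s := Ω)
      (f := fun x => th n (u x) * ‖gradient u x‖ ^ 2)]
    · rw [ofReal_integral_eq_lintegral_ofReal]
      · exact ((E n).1.integrable_of_hasCompactSupport (E n).2.1).integrableOn
      · exact Eventually.of_forall fun x => mul_nonneg (th_nn _ _) (by positivity)
    · intro x hx
      rw [hu.2 x hx, th_zero n (by positivity), zero_mul]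
  have L2 : Tendsto (fun n => ∫⁻ x in Ω, ENNReal.ofReal (th n (u x) * ‖gradient u x‖ ^ 2)) atTop
      (𝓝 (∫⁻ x in Ω, ENNReal.ofReal (‖gradient u x‖ ^ 2))) := by
    refine lintegral_tendsto_of_tendsto_of_monotone (fun n => (E n).1.measurable.ennreal_ofReal.aemeasurable)
      (Eventually.of_forall fun x => ?_) ?_
    · intro n m h
      refine ENNReal.ofReal_le_ofReal (mul_le_mul_of_nonneg_right ?_ (by positivity))
      exact th_mono (unn x) h
    · filter_upwards [ae_restrict_mem ho.measurableSet] with x hx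
      refine ENNReal.tendsto_ofReal ?_
      have := (th_lim (hu0 x hx)).mul_const (‖gradient u x‖ ^ 2)
      rwa [one_mul] at this
  simp only [L1] at L2
  have L3 := tendsto_nhds_unique L2 (ENNReal.tendsto_ofReal R)
  have hnn : 0 ≤ ∫ x, g x * u x := integral_nonneg fun x => mul_nonneg (hg0 x) (unn x)
  have e1 : gradNorm2 Ω u ^ 2 = (∫⁻ x in Ω, ENNReal.ofReal (‖gradient u x‖ ^ 2)).toReal := by
    rw [gradNorm2, eLpNorm_eq_lintegral_rpow_enorm_toReal two_ne_zero ENNReal.ofNat_ne_top, ← ENNReal.toReal_pow,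
      ← ENNReal.rpow_natCast, ← ENNReal.rpow_mul]
    norm_num
  rw [e1, L3, ENNReal.toReal_ofReal hnn]


theorem main_aux {N : ℕ} (hN : 1 ≤ N) {Ω : Set (EE N)} (hΩo : IsOpen Ω)
    (hΩbd : Bornology.IsBounded Ω) {q d : ℝ} (hq0 : 0 < q) (hq1 : q < 1) (hd : 0 < d)
    {l : ℝ} {φ₁ : EE N → ℝ} (heig : IsFirstEigenpair Ω l φ₁) {ξ : EE N → ℝ} (hξ : IsTorsionFn Ω ξ) :
    ∃ μ₀ : ℝ, 0 < μ₀ ∧ ∀ μ : ℝ, 0 < μ → μ < μ₀ → ∃ u : EE N → ℝ,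
      ContinuousOn u (closure Ω) ∧ ContDiffOn ℝ 2 u Ω ∧
      (∀ x ∈ Ω, (-(1 + d * (gradNorm2 Ω u) ^ 2)) * lapl u x = μ * u x ^ q + π * Real.sin (u x) ^ 3) ∧
      (∀ x ∈ Ω, 0 < u x ∧ u x ≤ π / 2) ∧ (∀ x ∈ frontier Ω, u x = 0) := by
  obtain ⟨k⟩ := exists_ker hN
  obtain ⟨hl, e1, e2, e3, e4, e5, e6⟩ := heig
  obtain ⟨x1, x2, x3, x4, x5⟩ := hξ
  have D : Dom k Ω (Ω.indicator ξ) := ⟨hΩo, hΩbd, C0.of_closure x1 x5,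
    (MV_of_classical k hΩo x2 x4).congr (fun x hx => (indicator_of_mem hx ξ).symm) fun _ _ => rfl,
    fun x => indicator_nonneg x3 x⟩
  obtain ⟨X, hX0, hX⟩ := D.hξ.bm D.hb
  have hX' : ∀ x, Ω.indicator ξ x ≤ X + 1 := fun x => by
    have := (abs_le.1 (hX.2 x)).2; linarith
  obtain ⟨μ₀, hμ₀, Hμ⟩ := NL_exists hq0 hq1 (show 0 < X + 1 by linarith)
  refine ⟨μ₀, hμ₀, fun μ hμ hμlt => ?_⟩
  obtain ⟨a, p, H, haπ, hFa⟩ := Hμ μ hμ hμlt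
  obtain ⟨t, u, ht, hu, hu0, hua, hum, hteq⟩ := D.exist H (show 0 < X + 1 by linarith) hX' hFa hl hd
    (φ := Ω.indicator φ₁) (C0.of_closure e1 e5) (fun x hx => by rw [indicator_of_mem hx]; exact e3 x hx)
    (fun x => by
      by_cases hx : x ∈ Ω
      · rw [indicator_of_mem hx]; exact e6.2 ⟨x, subset_closure hx, rfl⟩
      · rw [indicator_of_notMem hx]; exact zero_le_one)
    ((MV_of_classical k hΩo e2 e4).congr (fun x hx => (indicator_of_mem hx φ₁).symm) fun x hx => by
      rw [indicator_of_mem hx])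
  have unn : ∀ x, 0 ≤ u x := fun x => by
    by_cases hx : x ∈ Ω
    · exact (hu0 x hx).le
    · rw [hu.2 x hx]
  obtain ⟨Mu, -, hMu⟩ := hu.bm hΩbd
  have hg := hu.compF H.cont H.zero t
  obtain ⟨Mg, -, hMg⟩ := hg.bm hΩbd
  have r1 := MV.reg1 hΩo hMu hMg hum
  have rg : ContDiffOn ℝ 1 (fun x => t * FF μ q (u x)) Ω := fun x hx => by
    have c := (H.c1 (u x) (hu0 x hx) (hua x)).comp_contDiffWithinAt x (r1 x hx)
    exact contDiffWithinAt_const.mul c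
  have r2 := MV.reg2 hΩo hMu rg hum
  have hlap : ∀ x ∈ Ω, -lapl u x = t * FF μ q (u x) := fun x hx =>
    MV.lapl_eq hΩo r2 hMg hg.1.continuousOn hum hx
  have en := energy hΩo hΩbd hu hu0 r2 hlap hg.1 fun x => mul_nonneg ht.le (H.nn (unn x))
  have en2 : gradNorm2 Ω u ^ 2 = t * ∫ x, FF μ q (u x) * u x := by
    rw [en, ← integral_const_mul]
    congr 1; ext x; ring
  refine ⟨u, hu.1.continuousOn, r2, fun x hx => ?_, fun x hx => ⟨hu0 x hx, (hua x).trans haπ.le⟩, fun x hx => ?_⟩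
  · rw [← FF_eq (unn x) ((hua x).trans haπ.le), en2, neg_mul, ← mul_neg, hlap x hx, ← mul_assoc, mul_comm _ t,
      hteq, one_mul]
  · exact hu.2 x fun h => by
      rw [hΩo.frontier_eq] at hx; exact hx.2 h

end Helpers

/-- Theorem 2.4: for small `μ > 0`, the problem
`-(1 + d‖∇u‖₂²) Δu = μ u^q + π sin³(u)`, `u > 0` in `Ω`, `u = 0` on `∂Ω`,
has a classical solution satisfying `0 < u ≤ π/2` in `Ω`. -/
theorem stmt_11 {N : ℕ} (hN : 1 ≤ N) (Ω : Set (EuclideanSpace ℝ (Fin N)))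
    (hΩo : IsOpen Ω) (hΩconn : IsConnected Ω) (hΩbd : Bornology.IsBounded Ω)
    (q d : ℝ) (hq0 : 0 < q) (hq1 : q < 1) (hd : 0 < d)
    (l : ℝ) (φ₁ : EuclideanSpace ℝ (Fin N) → ℝ) (heig : IsFirstEigenpair Ω l φ₁)
    (ξ : EuclideanSpace ℝ (Fin N) → ℝ) (hξ : IsTorsionFn Ω ξ) :
    ∃ μ₀ : ℝ, 0 < μ₀ ∧ ∀ μ : ℝ, 0 < μ → μ < μ₀ →
      ∃ u : EuclideanSpace ℝ (Fin N) → ℝ,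
        ContinuousOn u (closure Ω) ∧ ContDiffOn ℝ 2 u Ω ∧
        (∀ x ∈ Ω, (-(1 + d * (gradNorm2 Ω u) ^ 2)) * lapl u x
          = μ * u x ^ q + π * Real.sin (u x) ^ 3) ∧
        (∀ x ∈ Ω, 0 < u x ∧ u x ≤ π / 2) ∧
        (∀ x ∈ frontier Ω, u x = 0) := by
  exact main_aux hN hΩo hΩbd hq0 hq1 hd heig hξ
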